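/- arXiv:2308.16782 — 8 statements merged into one kernel-verified Lean document; each statement's English description precedes it below -/
import Mathlib

section
/- For each positive integer n, the type A minuscule polynomial N_n(x) = (1/(4n+2)) ∑_{k=1}^{n-1} k(n-k) C(2n+2, 2k+1) x^k has only real zeros (i.e., every complex root of N_n is real). -/
/-!
Put `a k = C(2n+2, 2k+1)` and `P(x) = ∑_{k ≤ n} a k x^k`. Since
`2 s P(s²) = (1+s)^(2n+2) - (1-s)^(2n+2)`, a zero `s²` of `P` with `s ≠ 0` forces
`|1+s| = |1-s|`, so `s` is purely imaginary and `s²` is real. By Gauss–Lucas the derivative of a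
polynomial with only real zeros has only real zeros (`im_eq_zero_of_derivative`), and inverting the
variable (reversing the coefficients) preserves reality of the zeros. The factor `k` in `N_n` comes
from differentiating `P`, and the factor `n - k` from differentiating the reversal of `x P'(x)`.
-/

/-- The type A minuscule polynomial
`N_n(x) = (1/(4n+2)) ∑_{k=1}^{n-1} k(n-k) C(2n+2, 2k+1) x^k`. -/
noncomputable def minusculeN (n : ℕ) : Polynomial ℝ :=
  ∑ k ∈ Finset.Icc 1 (n - 1),
    Polynomial.C (((k * (n - k) * Nat.choose (2 * n + 2) (2 * k + 1) : ℕ) : ℝ) /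
      (4 * (n : ℝ) + 2)) * Polynomial.X ^ k

open Polynomial in
/-- Consequence of Gauss–Lucas: differentiation preserves having only real zeros. -/
lemma im_eq_zero_of_derivative {p : ℂ[X]} (hp : ∀ z, p.eval z = 0 → z.im = 0)
    (hd : derivative p ≠ 0) {z : ℂ} (hz : (derivative p).eval z = 0) : z.im = 0 := by
  have hdeg : 0 < p.degree := by
    by_contra! h
    rw [eq_C_of_degree_le_zero h] at hd
    simp at hd
  have h1 : z ∈ (derivative p).rootSet ℂ := by
    rw [mem_rootSet]
    exact ⟨hd, by simpa using hz⟩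
  have h2 := rootSet_derivative_subset_convexHull_rootSet hdeg h1
  have hc : Convex ℝ {w : ℂ | w.im = 0} := by
    intro x hx y hy a b _ _ _
    simp only [Set.mem_ofPred_eq] at hx hy ⊢
    simp [hx, hy]
  refine convexHull_min (fun w hw => ?_) hc h2
  rw [mem_rootSet] at hw
  exact hp w (by simpa using hw.2)

lemma two_mul_sum_choose_odd (n : ℕ) (s : ℂ) :
    2 * s * ∑ k ∈ Finset.range (n + 1), ((2 * n + 2).choose (2 * k + 1) : ℂ) * (s ^ 2) ^ k =
      (1 + s) ^ (2 * n + 2) - (1 - s) ^ (2 * n + 2) := by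
  have split : ∀ (f : ℕ → ℂ) (m : ℕ), ∑ i ∈ Finset.range (2 * m), f i =
      ∑ k ∈ Finset.range m, (f (2 * k) + f (2 * k + 1)) := by
    intro f m
    induction m with
    | zero => simp
    | succ m ih =>
      rw [Finset.sum_range_succ, ← ih, Nat.mul_succ, Finset.sum_range_succ, Finset.sum_range_succ]
      ring
  rw [add_comm 1 s, show (1 : ℂ) - s = -s + 1 by ring, add_pow, add_pow, ← Finset.sum_sub_distrib,
    Finset.sum_range_succ _ (2 * n + 2), show 2 * n + 2 = 2 * (n + 1) by ring, split, Finset.mul_sum]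
  have he : (-s) ^ (2 * (n + 1)) = s ^ (2 * (n + 1)) := by rw [pow_mul, pow_mul, neg_sq]
  rw [he, sub_self, add_zero]
  refine Finset.sum_congr rfl fun k _ => ?_
  have h1 : (-s) ^ (2 * k) = s ^ (2 * k) := by rw [pow_mul, pow_mul, neg_sq]
  rw [pow_succ (-s) (2 * k), pow_succ s (2 * k), h1, ← pow_mul s]
  simp only [one_pow]
  ring

lemma im_eq_zero_of_sum_choose_odd (n : ℕ) (z : ℂ)
    (hz : ∑ k ∈ Finset.range (n + 1), ((2 * n + 2).choose (2 * k + 1) : ℂ) * z ^ k = 0) :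
    z.im = 0 := by
  obtain ⟨s, rfl⟩ := IsAlgClosed.exists_pow_nat_eq z two_pos
  have h := two_mul_sum_choose_odd n s
  rw [hz, mul_zero, eq_comm, sub_eq_zero] at h
  have hn : ‖1 + s‖ = ‖1 - s‖ := by
    have := congrArg norm h
    rw [norm_pow, norm_pow] at this
    exact (pow_left_inj₀ (norm_nonneg _) (norm_nonneg _) (by omega)).1 this
  have hsq : Complex.normSq (1 + s) = Complex.normSq (1 - s) := by
    rw [Complex.normSq_eq_norm_sq, Complex.normSq_eq_norm_sq, hn]
  have hre : s.re = 0 := by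
    simp [Complex.normSq_apply] at hsq
    linarith
  simp [pow_two, hre]

/-- `∑ k a_k z^k` is `z P'(z)` for `P = ∑ a_k x^k`. -/
lemma im_eq_zero_of_sum_mul_choose_odd (n : ℕ) (hn : 0 < n) (z : ℂ)
    (hz : ∑ k ∈ Finset.range (n + 1), (k : ℂ) * ((2 * n + 2).choose (2 * k + 1) : ℂ) * z ^ k = 0) :
    z.im = 0 := by
  by_cases hz0 : z = 0
  · simp [hz0]
  let P : Polynomial ℂ := ∑ k ∈ Finset.range (n + 1),
    Polynomial.C ((2 * n + 2).choose (2 * k + 1) : ℂ) * Polynomial.X ^ k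
  have key : ∀ w, w * (Polynomial.derivative P).eval w =
      ∑ k ∈ Finset.range (n + 1), (k : ℂ) * ((2 * n + 2).choose (2 * k + 1) : ℂ) * w ^ k := by
    intro w
    simp only [P, Polynomial.derivative_sum, Polynomial.derivative_C_mul_X_pow,
      Polynomial.eval_finsetSum, Finset.mul_sum, Polynomial.eval_mul, Polynomial.eval_C,
      Polynomial.eval_pow, Polynomial.eval_X]
    refine Finset.sum_congr rfl fun k _ => ?_
    rcases k with _ | k
    · simp
    · rw [Nat.add_sub_cancel]
      ring
  refine im_eq_zero_of_derivative (p := P) (fun w hw => ?_) (fun h0 => ?_)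
    ((mul_eq_zero.1 ((key z).trans hz)).resolve_left hz0)
  · refine im_eq_zero_of_sum_choose_odd n w ?_
    simpa [P, Polynomial.eval_finsetSum] using hw
  · -- The coefficients of `x P'` are nonnegative and not all zero, so its value at `1` is nonzero.
    have h1 := key 1
    rw [h0] at h1
    simp only [Polynomial.eval_zero, mul_zero, one_pow, mul_one] at h1
    have h2 := Finset.sum_eq_zero_iff.1 (by exact_mod_cast h1.symm) 1
      (Finset.mem_range.2 (by omega : 1 < n + 1))
    have := Nat.choose_pos (show 2 * 1 + 1 ≤ 2 * n + 2 by omega)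
    rcases Nat.mul_eq_zero.1 h2 with h2 | h2 <;> omega

/-- The sum is `z^(n-1) A'(1/z)`, where `A = ∑ k a_k x^(n-k)` is the reversal of `x P'(x)`. -/
lemma im_eq_zero_of_sum_mul_mul_choose_odd (n : ℕ) (hn : 2 ≤ n) (z : ℂ)
    (hz : ∑ k ∈ Finset.range (n + 1),
      ((n - k : ℕ) : ℂ) * ((k : ℂ) * ((2 * n + 2).choose (2 * k + 1) : ℂ)) * z ^ k = 0) :
    z.im = 0 := by
  by_cases hz0 : z = 0
  · simp [hz0]
  let A : Polynomial ℂ := ∑ k ∈ Finset.range (n + 1),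
    Polynomial.C ((k : ℂ) * ((2 * n + 2).choose (2 * k + 1) : ℂ)) * Polynomial.X ^ (n - k)
  have key : ∀ w : ℂ, w ≠ 0 → w ^ n * (w⁻¹ * (Polynomial.derivative A).eval w⁻¹) =
      ∑ k ∈ Finset.range (n + 1),
        ((n - k : ℕ) : ℂ) * ((k : ℂ) * ((2 * n + 2).choose (2 * k + 1) : ℂ)) * w ^ k := by
    intro w hw
    simp only [A, Polynomial.derivative_sum, Polynomial.derivative_C_mul_X_pow,
      Polynomial.eval_finsetSum, Finset.mul_sum, Polynomial.eval_mul, Polynomial.eval_C,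
      Polynomial.eval_pow, Polynomial.eval_X]
    refine Finset.sum_congr rfl fun k hk => ?_
    obtain ⟨m, rfl⟩ := Nat.exists_eq_add_of_le (Nat.lt_succ_iff.1 (Finset.mem_range.1 hk))
    rw [Nat.add_sub_cancel_left]
    rcases m with _ | m
    · simp
    · rw [Nat.add_sub_cancel]
      have h3 : w ^ (k + (m + 1)) * (w⁻¹ * w⁻¹ ^ m) = w ^ k := by
        rw [← pow_succ', pow_add, mul_assoc, ← mul_pow, mul_inv_cancel₀ hw, one_pow, mul_one]
      linear_combination ((k : ℂ) * ((2 * (k + (m + 1)) + 2).choose (2 * k + 1) : ℂ) *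
        ((m + 1 : ℕ) : ℂ)) * h3
  have hroot : (Polynomial.derivative A).eval z⁻¹ = 0 :=
    (mul_eq_zero.1 ((mul_eq_zero.1 ((key z hz0).trans hz)).resolve_left
      (pow_ne_zero _ hz0))).resolve_left (inv_ne_zero hz0)
  suffices h : (z⁻¹).im = 0 by
    rw [Complex.inv_im, div_eq_zero_iff, neg_eq_zero] at h
    exact h.resolve_right (by simpa using hz0)
  refine im_eq_zero_of_derivative (p := A) (fun w hw => ?_) (fun h0 => ?_) hroot
  · by_cases hw0 : w = 0
    · simp [hw0]
    suffices h : (w⁻¹).im = 0 by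
      rw [Complex.inv_im, div_eq_zero_iff, neg_eq_zero] at h
      exact h.resolve_right (by simpa using hw0)
    refine im_eq_zero_of_sum_mul_choose_odd n (by omega) _ ?_
    have h4 : w ^ n * ∑ k ∈ Finset.range (n + 1),
        (k : ℂ) * ((2 * n + 2).choose (2 * k + 1) : ℂ) * w⁻¹ ^ k = A.eval w := by
      simp only [A, Polynomial.eval_finsetSum, Finset.mul_sum, Polynomial.eval_mul,
        Polynomial.eval_C, Polynomial.eval_pow, Polynomial.eval_X]
      refine Finset.sum_congr rfl fun k hk => ?_
      rw [pow_sub₀ w hw0 (Nat.lt_succ_iff.1 (Finset.mem_range.1 hk)), inv_pow]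
      ring
    exact (mul_eq_zero.1 (h4.trans hw)).resolve_left (pow_ne_zero _ hw0)
  · -- As before, the sum has nonnegative coefficients and a nonzero term, so is nonzero at `1`.
    have h1 := key 1 one_ne_zero
    rw [h0] at h1
    simp only [Polynomial.eval_zero, mul_zero, one_pow, mul_one] at h1
    have h2 := Finset.sum_eq_zero_iff.1 (by exact_mod_cast h1.symm) 1
      (Finset.mem_range.2 (by omega : 1 < n + 1))
    have := Nat.choose_pos (show 2 * 1 + 1 ≤ 2 * n + 2 by omega)
    rcases Nat.mul_eq_zero.1 h2 with h2 | h2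
    · omega
    · rcases Nat.mul_eq_zero.1 h2 with h2 | h2 <;> omega

/-- For each positive integer `n`, the polynomial `N_n` has only real zeros:
every complex root of `N_n` is real. -/
theorem minusculeN_real_rooted (n : ℕ) (hn : 0 < n) :
    ∀ z ∈ ((minusculeN n).map (algebraMap ℝ ℂ)).roots, z.im = 0 := by
  intro z hz
  -- `N_1 = 0`, whose multiset of roots is empty.
  obtain rfl | hn2 : n = 1 ∨ 2 ≤ n := by omega
  · simp [minusculeN] at hz
  have hz' := Polynomial.isRoot_of_mem_roots hz
  refine im_eq_zero_of_sum_mul_mul_choose_odd n hn2 z ?_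
  have hc : (4 * (n : ℂ) + 2) ≠ 0 := by exact_mod_cast (by omega : 4 * n + 2 ≠ 0)
  rw [Polynomial.IsRoot.def, minusculeN, Polynomial.map_sum, Polynomial.eval_finsetSum] at hz'
  -- The terms `k = 0` and `k = n` vanish, so the range of summation can be enlarged.
  rw [← Finset.sum_subset (s₁ := Finset.Icc 1 (n - 1))]
  · rw [← mul_zero (4 * (n : ℂ) + 2), ← hz', Finset.mul_sum]
    refine Finset.sum_congr rfl fun k _ => ?_
    simp
    field_simp
  · intro k hk
    simp only [Finset.mem_Icc, Finset.mem_range] at hk ⊢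
    omega
  · intro k hk hk'
    simp only [Finset.mem_Icc, Finset.mem_range] at hk hk'
    obtain rfl | rfl : k = 0 ∨ k = n := by omega
    · simp
    · simp
end

section
/- For every positive integer n and every real x, ∑_{k=0}^{n} C(2n+2, 2k+1) x^k = 2^{2n+1} ∏_{k=1}^{n} (1 - (1-x) cos²(kπ/(2n+2))). In particular the polynomial f_n(x) := ∑_{k=0}^{n} C(2n+2, 2k+1) x^k has only real zeros, namely 1 - 1/cos²(kπ/(2n+2)) for k = 1, …, n. -/
/-!
Splitting the binomial expansions gives `(1 + y) ^ m - (1 - y) ^ m = 2 y f_n(y²)` for `m = 2n + 2`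
(`FnProduct.odd_part`). With `y = i tan θ`, `θ = kπ/m`, de Moivre's formula shows that the left-hand
side vanishes, since `(cos θ ± i sin θ) ^ m = e^{± i k π}` are equal. Hence
`-tan² θ = 1 - 1 / cos² θ` is a zero of `f_n` for `1 ≤ k ≤ n` (`FnProduct.eval_node`). With `y = 1`
it gives `f_n(1) = 2 ^ (2n + 1)`.

The two sides of the product formula are polynomials in `x` of degree at most `n` which agree at the
`n` points `1 - 1 / cos²(kπ/m)` (where both vanish) and at `1`. These `n + 1` points are distinct
because `cos` is positive and injective on `(0, π/2)`, so the polynomials coincide.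
-/

namespace FnProduct

open Polynomial

theorem sum_range_two_mul {R : Type*} [CommRing R] (f : ℕ → R) (N : ℕ) :
    ∑ i ∈ Finset.range (2 * N), f i = ∑ k ∈ Finset.range N, (f (2 * k) + f (2 * k + 1)) := by
  induction N with
  | zero => simp
  | succ N ih =>
    rw [Finset.sum_range_succ, ← ih, show 2 * (N + 1) = 2 * N + 1 + 1 by ring,
      Finset.sum_range_succ, Finset.sum_range_succ]
    ring

/-- The odd part of the binomial expansion of `(1 + y) ^ (2n + 2)`. -/
theorem odd_part {R : Type*} [CommRing R] (n : ℕ) (y : R) :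
    (1 + y) ^ (2 * n + 2) - (1 - y) ^ (2 * n + 2) =
      2 * y * ∑ k ∈ Finset.range (n + 1), (Nat.choose (2 * n + 2) (2 * k + 1) : R) * (y ^ 2) ^ k := by
  have h (z : R) : (1 + z) ^ (2 * n + 2) =
      ∑ i ∈ Finset.range (2 * (n + 1) + 1), z ^ i * (Nat.choose (2 * n + 2) i : R) := by
    rw [add_comm, add_pow]
    exact Finset.sum_congr rfl fun i _ => by simp
  rw [sub_eq_add_neg 1 y, h, h, Finset.sum_range_succ, Finset.sum_range_succ,
    sum_range_two_mul, sum_range_two_mul, Even.neg_pow (even_two_mul _),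
    add_sub_add_right_eq_sub, ← Finset.sum_sub_distrib, Finset.mul_sum]
  refine Finset.sum_congr rfl fun k _ => ?_
  rw [Even.neg_pow (even_two_mul k), Odd.neg_pow (odd_two_mul_add_one k)]
  ring

theorem angle_mem {n k : ℕ} (hk : k ∈ Finset.Icc 1 n) :
    0 < (k * Real.pi / (2 * n + 2) : ℝ) ∧ (k * Real.pi / (2 * n + 2) : ℝ) < Real.pi / 2 := by
  obtain ⟨h1, h2⟩ := Finset.mem_Icc.mp hk
  have h1' : (1 : ℝ) ≤ k := by exact_mod_cast h1
  have h2' : (k : ℝ) ≤ n := by exact_mod_cast h2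
  have hpi := Real.pi_pos
  refine ⟨by positivity, ?_⟩
  rw [div_lt_div_iff₀ (by positivity) (by norm_num)]
  nlinarith

theorem cos_pos {n k : ℕ} (hk : k ∈ Finset.Icc 1 n) :
    0 < Real.cos (k * Real.pi / (2 * n + 2)) := by
  obtain ⟨h1, h2⟩ := angle_mem hk
  exact Real.cos_pos_of_mem_Ioo ⟨by linarith, h2⟩

theorem eval_node {n k : ℕ} (hk : k ∈ Finset.Icc 1 n) :
    ∑ j ∈ Finset.range (n + 1), (Nat.choose (2 * n + 2) (2 * j + 1) : ℝ) *
        (1 - 1 / Real.cos (k * Real.pi / (2 * n + 2)) ^ 2) ^ j = 0 := by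
  have hc := cos_pos hk
  have hs : 0 < Real.sin (k * Real.pi / (2 * n + 2)) := by
    obtain ⟨h1, h2⟩ := angle_mem hk
    exact Real.sin_pos_of_pos_of_lt_pi h1 (by linarith)
  have hmθ : ((2 * n + 2 : ℕ) : ℝ) * (k * Real.pi / (2 * n + 2)) = k * Real.pi := by
    push_cast; field_simp
  generalize (k * Real.pi / (2 * n + 2) : ℝ) = θ at *
  have hcC : (Real.cos θ : ℂ) ≠ 0 := by exact_mod_cast hc.ne'
  have hsC : (Real.sin θ : ℂ) ≠ 0 := by exact_mod_cast hs.ne'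
  have hsc : (Real.sin θ : ℂ) ^ 2 + (Real.cos θ : ℂ) ^ 2 = 1 := by
    exact_mod_cast Real.sin_sq_add_cos_sq θ
  set y : ℂ := Real.sin θ / Real.cos θ * Complex.I with hy
  have hy0 : y ≠ 0 := mul_ne_zero (div_ne_zero hsC hcC) Complex.I_ne_zero
  have hy2 : y ^ 2 = ((1 - 1 / Real.cos θ ^ 2 : ℝ) : ℂ) := by
    rw [hy, mul_pow, Complex.I_sq]
    push_cast [-Complex.ofReal_cos, -Complex.ofReal_sin]
    field_simp
    linear_combination -hsc
  have hsin : Complex.sin ((2 * n + 2 : ℕ) * (θ : ℂ)) = 0 := by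
    have := Real.sin_nat_mul_pi k
    rw [← hmθ] at this
    exact_mod_cast this
  have key : (1 + y) ^ (2 * n + 2) - (1 - y) ^ (2 * n + 2) = 0 := by
    have e1 : 1 + y = (Complex.cos θ + Complex.sin θ * Complex.I) / Real.cos θ := by
      rw [hy, ← Complex.ofReal_cos, ← Complex.ofReal_sin]; field_simp
    have e2 : 1 - y = (Complex.cos (-θ) + Complex.sin (-θ) * Complex.I) / Real.cos θ := by
      rw [hy, Complex.cos_neg, Complex.sin_neg, ← Complex.ofReal_cos, ← Complex.ofReal_sin]
      field_simp; ring
    rw [e1, e2, div_pow, div_pow, Complex.cos_add_sin_mul_I_pow, Complex.cos_add_sin_mul_I_pow,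
      mul_neg, Complex.cos_neg, Complex.sin_neg, hsin]
    simp
  rw [odd_part, hy2] at key
  have := (mul_eq_zero.mp key).resolve_left (mul_ne_zero two_ne_zero hy0)
  exact_mod_cast this

theorem eval_one (n : ℕ) :
    ∑ k ∈ Finset.range (n + 1), (Nat.choose (2 * n + 2) (2 * k + 1) : ℝ) * 1 ^ k
      = 2 ^ (2 * n + 1) := by
  have h := odd_part n (1 : ℝ)
  rw [sub_self, zero_pow (by omega), one_pow] at h
  have h2 : (1 + 1 : ℝ) ^ (2 * n + 2) = 2 * 2 ^ (2 * n + 1) := by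
    rw [show (1 + 1 : ℝ) = 2 by norm_num]; ring
  linarith

theorem injOn_node (n : ℕ) :
    Set.InjOn (fun k : ℕ => 1 - 1 / Real.cos (k * Real.pi / (2 * n + 2)) ^ 2)
      (Finset.Icc 1 n : Finset ℕ) := by
  intro a ha b hb hab
  have ha' := angle_mem (Finset.mem_coe.mp ha)
  have hb' := angle_mem (Finset.mem_coe.mp hb)
  have hca := cos_pos (Finset.mem_coe.mp ha)
  have hcb := cos_pos (Finset.mem_coe.mp hb)
  have h1 : Real.cos (a * Real.pi / (2 * n + 2)) ^ 2 = Real.cos (b * Real.pi / (2 * n + 2)) ^ 2 := by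
    have := sub_right_injective hab
    simpa using this
  have h2 := (pow_left_inj₀ hca.le hcb.le two_ne_zero).mp h1
  have h3 := Real.injOn_cos ⟨ha'.1.le, by linarith⟩ ⟨hb'.1.le, by linarith⟩ h2
  have hpi := Real.pi_ne_zero
  field_simp at h3
  exact_mod_cast h3

theorem product_formula (n : ℕ) (x : ℝ) :
    ∑ k ∈ Finset.range (n + 1), (Nat.choose (2 * n + 2) (2 * k + 1) : ℝ) * x ^ k =
        2 ^ (2 * n + 1) *
          ∏ k ∈ Finset.Icc 1 n,
            (1 - (1 - x) * Real.cos (k * Real.pi / (2 * n + 2)) ^ 2) := by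
  set node : ℕ → ℝ := fun k => 1 - 1 / Real.cos (k * Real.pi / (2 * n + 2)) ^ 2 with hnode
  let P : ℝ[X] := ∑ k ∈ Finset.range (n + 1), C (Nat.choose (2 * n + 2) (2 * k + 1) : ℝ) * X ^ k
  let Q : ℝ[X] := C (2 ^ (2 * n + 1)) *
    ∏ k ∈ Finset.Icc 1 n, (1 - (1 - X) * C (Real.cos (k * Real.pi / (2 * n + 2)) ^ 2))
  have hP (z : ℝ) : P.eval z =
      ∑ k ∈ Finset.range (n + 1), (Nat.choose (2 * n + 2) (2 * k + 1) : ℝ) * z ^ k := by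
    simp [P, eval_finsetSum]
  have hQ (z : ℝ) : Q.eval z = 2 ^ (2 * n + 1) *
      ∏ k ∈ Finset.Icc 1 n, (1 - (1 - z) * Real.cos (k * Real.pi / (2 * n + 2)) ^ 2) := by
    simp [Q, eval_prod]
  let s : Finset ℝ := insert 1 ((Finset.Icc 1 n).image node)
  have hs : s.card = n + 1 := by
    rw [Finset.card_insert_of_notMem, Finset.card_image_of_injOn (injOn_node n), Nat.card_Icc]
    · omega
    · intro h
      obtain ⟨k, hk, h⟩ := Finset.mem_image.mp h
      have : 0 < 1 / Real.cos (k * Real.pi / (2 * n + 2)) ^ 2 := by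
        have := cos_pos hk
        positivity
      simp only [hnode] at h
      linarith
  have hdP : P.degree < s.card := by
    rw [hs, ← mem_degreeLT]
    refine Submodule.sum_mem _ fun k hk => mem_degreeLT.mpr ?_
    refine (degree_C_mul_X_pow_le _ _).trans_lt ?_
    exact_mod_cast Finset.mem_range.mp hk
  have hdQ : Q.degree < s.card := by
    rw [hs]
    refine (degree_le_of_natDegree_le (n := n) ?_).trans_lt (by exact_mod_cast n.lt_succ_self)
    refine (natDegree_C_mul_le _ _).trans ((natDegree_prod_le _ _).trans ?_)
    refine (Finset.sum_le_card_nsmul _ _ 1 fun k _ => ?_).trans (by simp)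
    compute_degree
  have hPQ : P = Q := by
    refine eq_of_degrees_lt_of_eval_finset_eq s hdP hdQ fun z hz => ?_
    rw [hP, hQ]
    rcases Finset.mem_insert.mp hz with rfl | hz
    · rw [eval_one]; simp
    · obtain ⟨k, hk, rfl⟩ := Finset.mem_image.mp hz
      rw [hnode, eval_node hk, Finset.prod_eq_zero hk, mul_zero]
      have := pow_ne_zero 2 (cos_pos hk).ne'
      rw [sub_sub_cancel, one_div_mul_cancel this, sub_self]
  rw [← hP, ← hQ, hPQ]

end FnProduct


/-- For every positive integer `n` and real `x`,
`∑_{k=0}^{n} C(2n+2, 2k+1) x^k = 2^{2n+1} ∏_{k=1}^{n} (1 - (1-x) cos²(kπ/(2n+2)))`;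
in particular the polynomial `f_n` has only the real zeros
`1 - 1/cos²(kπ/(2n+2))`, `k = 1, …, n`. -/
theorem fn_product_formula (n : ℕ) (hn : 0 < n) :
    (∀ x : ℝ,
      ∑ k ∈ Finset.range (n + 1), (Nat.choose (2 * n + 2) (2 * k + 1) : ℝ) * x ^ k =
        2 ^ (2 * n + 1) *
          ∏ k ∈ Finset.Icc 1 n,
            (1 - (1 - x) * Real.cos (k * Real.pi / (2 * n + 2)) ^ 2)) ∧
    ∀ k ∈ Finset.Icc 1 n,
      ∑ j ∈ Finset.range (n + 1), (Nat.choose (2 * n + 2) (2 * j + 1) : ℝ) *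
        (1 - 1 / Real.cos (k * Real.pi / (2 * n + 2)) ^ 2) ^ j = 0 := by
  exact ⟨FnProduct.product_formula n, fun k hk => FnProduct.eval_node hk⟩
end

section
/- For all n ≥ 2, the roots of N_n interlace those of N_{n+1}: writing the zeros of N_{n+1}(x) in decreasing order as r_1 ≥ r_2 ≥ ⋯ ≥ r_n (all real, counted with multiplicity) and those of N_n(x) as s_1 ≥ s_2 ≥ ⋯ ≥ s_{n-1}, one has r_n ≤ s_{n-1} ≤ r_{n-1} ≤ ⋯ ≤ s_1 ≤ r_1. -/
open Polynomial

/-! ### Coefficients and the three-term recurrence -/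

/-- The reciprocal factorial `1 / k!` on the integers, equal to `0` for `k < 0`, so that
`C(N, j) = N! (1 / j!) (1 / (N - j)!)` holds for all integers `j`. -/
noncomputable def invFact (k : ℤ) : ℝ := if 0 ≤ k then 1 / (k.toNat.factorial : ℝ) else 0

lemma invFact_sub_one (k : ℤ) : invFact (k - 1) = k * invFact k := by
  rcases lt_trichotomy k 0 with h | h | h
  · rw [invFact, invFact, if_neg (by omega), if_neg (by omega), mul_zero]
  · subst h; simp [invFact]
  · obtain ⟨j, rfl⟩ : ∃ j : ℕ, k = j + 1 := ⟨(k - 1).toNat, by omega⟩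
    have h1 : ((j : ℤ) + 1).toNat = j + 1 := by omega
    have : (j.factorial : ℝ) ≠ 0 := by positivity
    simp only [invFact, add_sub_cancel_right, h1, Nat.factorial_succ]
    rw [if_pos (by omega), if_pos (by omega)]
    push_cast [Int.toNat_natCast]
    field_simp

lemma invFact_neg {k : ℤ} (h : k < 0) : invFact k = 0 := by simp [invFact, not_le.2 h]

/-- The `k`-th coefficient of `N_n`, as a function of an integer `k`; it vanishes outside
`1 ≤ k ≤ n - 1`. -/
noncomputable def minusculeCoeff (n : ℕ) (k : ℤ) : ℝ :=
  k * (n - k) * ((2 * n + 2).factorial * invFact (2 * k + 1) * invFact (2 * n + 1 - 2 * k)) /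
    (4 * n + 2)

lemma choose_eq_invFact (N j : ℕ) :
    (N.choose j : ℝ) = N.factorial * invFact j * invFact (N - j) := by
  rcases le_or_gt j N with h | h
  · rw [Nat.cast_choose ℝ h, invFact, invFact, if_pos (by omega), if_pos (by omega)]
    have : ((N : ℤ) - j).toNat = N - j := by omega
    rw [this, Int.toNat_natCast]
    field_simp
  · rw [Nat.choose_eq_zero_of_lt h, invFact_neg (k := (N : ℤ) - j) (by omega)]
    simp

lemma coeff_minusculeN (n k : ℕ) : (minusculeN n).coeff k = minusculeCoeff n k := by
  have h : minusculeCoeff n k =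
      (((k * (n - k) * Nat.choose (2 * n + 2) (2 * k + 1) : ℕ) : ℝ) / (4 * (n : ℝ) + 2)) := by
    rcases le_or_gt k n with h | h
    · push_cast [Nat.cast_sub h]
      rw [choose_eq_invFact, minusculeCoeff]
      have h2 : ((2 * n + 2 : ℕ) : ℤ) - (2 * k + 1 : ℕ) = 2 * n + 1 - 2 * k := by push_cast; ring
      rw [h2]
      push_cast
      ring
    · rw [minusculeCoeff, invFact_neg (k := 2 * (n : ℤ) + 1 - 2 * k) (by omega),
        Nat.sub_eq_zero_of_le h.le]
      simp
  rw [h, minusculeN]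
  simp only [finsetSum_coeff, coeff_C_mul_X_pow]
  rw [Finset.sum_ite_eq]
  split_ifs with hk
  · rfl
  · rw [Finset.mem_Icc] at hk
    have : k = 0 ∨ n - k = 0 := by omega
    rcases this with h | h <;> simp [h]

lemma coeff_X_mul_minusculeN (n k : ℕ) :
    (X * minusculeN n).coeff k = minusculeCoeff n (k - 1) := by
  cases k with
  | zero => simp [minusculeCoeff, invFact_neg]
  | succ k => rw [coeff_X_mul, coeff_minusculeN]; push_cast; congr 1; ring

lemma coeff_X_mul_X_mul_minusculeN (n k : ℕ) :
    (X * (X * minusculeN n)).coeff k = minusculeCoeff n (k - 2) := by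
  cases k with
  | zero => simp [minusculeCoeff, invFact_neg]
  | succ k => rw [coeff_X_mul, coeff_X_mul_minusculeN]; push_cast; congr 1; ring

lemma minusculeCoeff_rec (m : ℕ) (k : ℤ) :
    m * minusculeCoeff (m + 2) k =
      2 * (m + 1) * (minusculeCoeff (m + 1) k + minusculeCoeff (m + 1) (k - 1)) -
      (m + 2) * (minusculeCoeff m k - 2 * minusculeCoeff m (k - 1) +
        minusculeCoeff m (k - 2)) := by
  -- Every term is a polynomial multiple of `(2m+2)! / ((2k+1)! (2m+5-2k)!)`.
  have down : ∀ a b : ℤ, b = a - 1 → invFact b = a * invFact a := by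
    rintro a b rfl; exact invFact_sub_one a
  have g1 := down (2 * k + 1) (2 * k) (by ring)
  have g2 := down (2 * k) (2 * k - 1) (by ring)
  have g3 := down (2 * k - 1) (2 * k - 2) (by ring)
  have g4 := down (2 * k - 2) (2 * k - 3) (by ring)
  have h1 := down (2 * m + 5 - 2 * k) (2 * m + 4 - 2 * k) (by ring)
  have h2 := down (2 * m + 4 - 2 * k) (2 * m + 3 - 2 * k) (by ring)
  have h3 := down (2 * m + 3 - 2 * k) (2 * m + 2 - 2 * k) (by ring)
  have h4 := down (2 * m + 2 - 2 * k) (2 * m + 1 - 2 * k) (by ring)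
  have f1 : ((2 * (m + 1) + 2).factorial : ℝ) =
      (2 * m + 4) * (2 * m + 3) * (2 * m + 2).factorial := by
    rw [show 2 * (m + 1) + 2 = (2 * m + 2) + 1 + 1 by ring, Nat.factorial_succ, Nat.factorial_succ]
    push_cast; ring
  have f2 : ((2 * (m + 2) + 2).factorial : ℝ) =
      (2 * m + 6) * (2 * m + 5) * ((2 * m + 4) * (2 * m + 3) * (2 * m + 2).factorial) := by
    rw [← f1, show 2 * (m + 2) + 2 = (2 * (m + 1) + 2) + 1 + 1 by ring, Nat.factorial_succ,
      Nat.factorial_succ]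
    push_cast; ring
  simp only [minusculeCoeff, f1, f2]
  have e1 : 2 * (k - 1) + 1 = 2 * k - 1 := by ring
  have e2 : 2 * (k - 2) + 1 = 2 * k - 3 := by ring
  have e3 : 2 * ((m + 2 : ℕ) : ℤ) + 1 - 2 * k = 2 * m + 5 - 2 * k := by push_cast; ring
  have e4 : 2 * ((m + 1 : ℕ) : ℤ) + 1 - 2 * k = 2 * m + 3 - 2 * k := by push_cast; ring
  have e5 : 2 * ((m + 1 : ℕ) : ℤ) + 1 - 2 * (k - 1) = 2 * m + 5 - 2 * k := by push_cast; ring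
  have e6 : 2 * (m : ℤ) + 1 - 2 * (k - 1) = 2 * m + 3 - 2 * k := by ring
  have e7 : 2 * (m : ℤ) + 1 - 2 * (k - 2) = 2 * m + 5 - 2 * k := by ring
  simp only [e1, e2, e3, e4, e5, e6, e7]
  rw [h4, h3, h2, h1, g4, g3, g2, g1]
  generalize invFact (2 * k + 1) = G
  generalize invFact (2 * m + 5 - 2 * k) = H
  generalize ((2 * m + 2).factorial : ℝ) = F
  push_cast
  generalize (k : ℝ) = k
  have d1 : (4 * ((m : ℝ) + 2) + 2) ≠ 0 := by positivity
  have d2 : (4 * ((m : ℝ) + 1) + 2) ≠ 0 := by positivity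
  have d3 : (4 * (m : ℝ) + 2) ≠ 0 := by positivity
  generalize (m : ℝ) = m at *
  rw [← mul_right_inj' d3]
  field_simp
  ring

lemma minusculeN_rec (m : ℕ) :
    C (m : ℝ) * minusculeN (m + 2) = C (2 * ((m : ℝ) + 1)) * ((1 + X) * minusculeN (m + 1)) -
      C ((m : ℝ) + 2) * ((1 - X) ^ 2 * minusculeN m) := by
  have e1 : (1 + X) * minusculeN (m + 1) = minusculeN (m + 1) + X * minusculeN (m + 1) := by ring
  have e2 : (1 - X) ^ 2 * minusculeN m =
      minusculeN m - C 2 * (X * minusculeN m) + X * (X * minusculeN m) := by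
    rw [show (C 2 : ℝ[X]) = 2 from rfl]; ring
  rw [e1, e2]
  ext k
  simp only [coeff_C_mul, coeff_add, coeff_sub, coeff_minusculeN, coeff_X_mul_minusculeN,
    coeff_X_mul_X_mul_minusculeN]
  exact minusculeCoeff_rec m k

/-! ### Removing the common zero at the origin -/

/-- `N_{m+2} / x`, a polynomial of degree `m`. -/
noncomputable def minusculeP (m : ℕ) : ℝ[X] := (minusculeN (m + 2)).divX

lemma X_mul_minusculeP (m : ℕ) : X * minusculeP m = minusculeN (m + 2) := by
  have h := X_mul_divX_add (minusculeN (m + 2))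
  rw [coeff_minusculeN] at h
  simpa [minusculeCoeff, minusculeP] using h

lemma coeff_minusculeP (m k : ℕ) : (minusculeP m).coeff k = minusculeCoeff (m + 2) (k + 1) := by
  rw [minusculeP, coeff_divX, coeff_minusculeN]; push_cast; rfl

lemma invFact_pos {k : ℤ} (h : 0 ≤ k) : 0 < invFact k := by
  rw [invFact, if_pos h]; positivity

lemma minusculeCoeff_pos {n : ℕ} {k : ℤ} (h : 0 < k) (h' : k < n) : 0 < minusculeCoeff n k := by
  have h1 := invFact_pos (k := 2 * k + 1) (by omega)
  have h2 := invFact_pos (k := 2 * n + 1 - 2 * k) (by omega)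
  have h3 : (0 : ℝ) < k := by exact_mod_cast h
  have h4 : (0 : ℝ) < n - k := by rw [sub_pos]; exact_mod_cast h'
  rw [minusculeCoeff]
  positivity

lemma minusculeP_eval_zero_pos (m : ℕ) : 0 < (minusculeP m).eval 0 := by
  rw [← coeff_zero_eq_eval_zero, coeff_minusculeP]
  exact minusculeCoeff_pos (by simp) (by push_cast; omega)

lemma coeff_minusculeP_self_pos (m : ℕ) : 0 < (minusculeP m).coeff m := by
  rw [coeff_minusculeP]
  exact minusculeCoeff_pos (by omega) (by push_cast; omega)

lemma natDegree_minusculeP (m : ℕ) : (minusculeP m).natDegree = m := by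
  refine natDegree_eq_of_le_of_coeff_ne_zero ?_ (coeff_minusculeP_self_pos m).ne'
  rw [natDegree_le_iff_coeff_eq_zero]
  intro k hk
  rw [coeff_minusculeP, minusculeCoeff]
  rcases (show k = m + 1 ∨ m + 1 < k by omega) with rfl | h
  · push_cast; ring
  · rw [invFact_neg (k := 2 * ((m + 2 : ℕ) : ℤ) + 1 - 2 * (k + 1)) (by push_cast; omega)]
    simp

lemma minusculeP_ne_zero (m : ℕ) : minusculeP m ≠ 0 := by
  intro h; simpa [h] using coeff_minusculeP_self_pos m

lemma leadingCoeff_minusculeP_pos (m : ℕ) : 0 < (minusculeP m).leadingCoeff := by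
  rw [leadingCoeff, natDegree_minusculeP]; exact coeff_minusculeP_self_pos m

lemma minusculeP_rec_eval (m : ℕ) (x : ℝ) :
    ((m : ℝ) + 2) * (minusculeP (m + 2)).eval x =
      2 * ((m : ℝ) + 3) * ((1 + x) * (minusculeP (m + 1)).eval x) -
      ((m : ℝ) + 4) * ((1 - x) ^ 2 * (minusculeP m).eval x) := by
  have h := minusculeN_rec (m + 2)
  rw [← X_mul_minusculeP (m + 2), show m + 2 + 1 = m + 1 + 2 by ring,
    ← X_mul_minusculeP (m + 1), ← X_mul_minusculeP m] at h
  have h' : (X : ℝ[X]) * (C ((m : ℝ) + 2) * minusculeP (m + 2)) =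
      X * (C (2 * ((m : ℝ) + 3)) * ((1 + X) * minusculeP (m + 1)) -
        C ((m : ℝ) + 4) * ((1 - X) ^ 2 * minusculeP m)) := by
    push_cast at h
    rw [show (m : ℝ) + 2 + 1 = m + 3 by ring, show (m : ℝ) + 2 + 2 = m + 4 by ring] at h
    linear_combination h
  have h2 := congrArg (eval x) (mul_left_cancel₀ X_ne_zero h')
  simpa using h2

lemma minusculeP_one_eval (x : ℝ) : (minusculeP 1).eval x = 4 * (1 + x) * (minusculeP 0).eval x := by
  have h := minusculeN_rec 1
  have h0 : minusculeN 1 = 0 := by simp [minusculeN]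
  rw [h0, ← X_mul_minusculeP 0, ← X_mul_minusculeP 1] at h
  have h' : (X : ℝ[X]) * minusculeP 1 = X * (C 4 * ((1 + X) * minusculeP 0)) := by
    norm_num at h
    rw [h]; ring
  have h2 := congrArg (eval x) (mul_left_cancel₀ X_ne_zero h')
  simp at h2
  linarith

/-! ### Signs of real-rooted polynomials -/

/-- A polynomial of degree `n` with `n` distinct known zeros has no others. -/
lemma roots_eq_ofFn {f : ℝ[X]} {n : ℕ} (hf : f ≠ 0) (hd : f.natDegree = n) (r : ℕ → ℝ)
    (hr : ∀ i j, i < j → j < n → r j < r i) (h0 : ∀ i < n, f.eval (r i) = 0) :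
    f.roots = (List.ofFn (fun i : Fin n => r i) : List ℝ) := by
  symm
  apply Multiset.eq_of_le_of_card_le
  · rw [Multiset.le_iff_subset]
    · intro a ha
      simp only [Multiset.mem_coe, List.mem_ofFn] at ha
      obtain ⟨i, rfl⟩ := ha
      rw [mem_roots hf]
      exact h0 i i.2
    · rw [Multiset.coe_nodup, List.nodup_ofFn]
      intro i j hij
      ext
      by_contra hne
      rcases lt_or_gt_of_ne hne with h | h
      · exact (hr _ _ h j.2).ne' hij
      · exact (hr _ _ h i.2).ne hij
  · simpa [hd] using card_roots' f

lemma eval_eq_prod {f : ℝ[X]} {n : ℕ} (hf : f ≠ 0) (hd : f.natDegree = n) (r : ℕ → ℝ)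
    (hr : ∀ i j, i < j → j < n → r j < r i) (h0 : ∀ i < n, f.eval (r i) = 0) (x : ℝ) :
    f.eval x = f.leadingCoeff * ∏ i ∈ Finset.range n, (x - r i) := by
  have h := roots_eq_ofFn hf hd r hr h0
  have h2 := C_leadingCoeff_mul_prod_multiset_X_sub_C (p := f) (by rw [h, hd]; simp)
  conv_lhs => rw [← h2, h]
  simp [List.map_ofFn, List.prod_ofFn, eval_prod, Finset.prod_range]

/-- A real polynomial with positive leading coefficient and simple real zeros alternates in sign:
it has sign `(-1)^i` at a point with exactly `i` zeros to its right. -/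
lemma sign_of_position {f : ℝ[X]} {n : ℕ} (hf : 0 < f.leadingCoeff) (hd : f.natDegree = n)
    (r : ℕ → ℝ) (hr : ∀ i j, i < j → j < n → r j < r i) (h0 : ∀ i < n, f.eval (r i) = 0)
    {x : ℝ} {i : ℕ} (hi : i ≤ n) (h1 : ∀ j < i, x < r j) (h2 : ∀ j, i ≤ j → j < n → r j < x) :
    0 < (-1) ^ i * f.eval x := by
  have hf0 : f ≠ 0 := leadingCoeff_ne_zero.1 hf.ne'
  rw [eval_eq_prod hf0 hd r hr h0, ← Finset.prod_range_mul_prod_Ico _ hi]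
  have e : ∏ j ∈ Finset.range i, (x - r j) = (-1) ^ i * ∏ j ∈ Finset.range i, (r j - x) := by
    rw [← Finset.card_range i, ← Finset.prod_const, Finset.card_range, ← Finset.prod_mul_distrib]
    exact Finset.prod_congr rfl fun j _ => by ring
  have p1 : 0 < ∏ j ∈ Finset.range i, (r j - x) :=
    Finset.prod_pos fun j hj => sub_pos.2 (h1 j (Finset.mem_range.1 hj))
  have p2 : 0 < ∏ j ∈ Finset.Ico i n, (x - r j) :=
    Finset.prod_pos fun j hj => sub_pos.2 (h2 j (Finset.mem_Ico.1 hj).1 (Finset.mem_Ico.1 hj).2)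
  have sq : ((-1 : ℝ) ^ i) * (-1) ^ i = 1 := by rw [← mul_pow]; simp
  rw [e, show ∀ a b c d : ℝ, a * (b * (a * c * d)) = (a * a) * (b * c * d) by intros; ring, sq]
  positivity

/-- Near `-∞` a polynomial of degree `n` with positive leading coefficient has sign `(-1)^n`. -/
lemma exists_far_left {f : ℝ[X]} {n : ℕ} (hf : 0 < f.leadingCoeff) (hd : f.natDegree = n)
    (hn : 0 < n) (a : ℝ) : ∃ L < a, 0 < (-1) ^ n * f.eval L := by
  have hg : Filter.Tendsto (fun x => ((C ((-1) ^ n) * f.comp (-X)).eval x))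
      Filter.atTop Filter.atTop := by
    have hnd : (f.comp (-X)).natDegree = n := by rw [natDegree_comp]; simp [hd]
    have hlc : (C ((-1) ^ n) * f.comp (-X)).leadingCoeff = f.leadingCoeff := by
      rw [leadingCoeff_mul, leadingCoeff_comp (by simp), leadingCoeff_C, hd]
      simp only [leadingCoeff_neg, leadingCoeff_X]
      rw [mul_comm, mul_assoc, ← mul_pow]; simp
    apply Polynomial.tendsto_atTop_of_leadingCoeff_nonneg
    · rw [← natDegree_pos_iff_degree_pos, natDegree_C_mul (by simp), hnd]; exact hn
    · rw [hlc]; exact hf.le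
  obtain ⟨y, h1, h2⟩ := ((hg.eventually_gt_atTop 0).and
    (Filter.eventually_gt_atTop (-a))).exists
  exact ⟨-y, by linarith, by simpa using h1⟩

/-! ### The Sturm induction -/

/-- The zeros of `minusculeP m` are `σ 1 > ⋯ > σ m`, those of `minusculeP (m+1)` are
`ρ 1 > ⋯ > ρ (m+1)`, and `0 > ρ 1 > σ 1 > ρ 2 > ⋯ > σ m > ρ (m+1)`.  Index `0` holds the extra
zero `0` of `N_{m+2}` and `N_{m+3}`; indices past the degree are irrelevant. -/
def Interlace (m : ℕ) (σ ρ : ℕ → ℝ) : Prop :=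
  σ 0 = 0 ∧ ρ 0 = 0 ∧ (∀ i < m, σ (i + 1) < ρ (i + 1)) ∧ (∀ i ≤ m, ρ (i + 1) < σ i) ∧
  (∀ i < m, (minusculeP m).eval (σ (i + 1)) = 0) ∧
  (∀ i ≤ m, (minusculeP (m + 1)).eval (ρ (i + 1)) = 0)

lemma strictAnti_of_step {r : ℕ → ℝ} {n : ℕ} (h : ∀ i < n, r (i + 1) < r i) {i j : ℕ}
    (hij : i < j) (hj : j ≤ n) : r j < r i := by
  induction j, hij using Nat.le_induction with
  | base => exact h i hj
  | succ j hij ih => exact (h j hj).trans (ih (by omega))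

lemma Interlace.anti_left {m : ℕ} {σ ρ : ℕ → ℝ} (h : Interlace m σ ρ) {i j : ℕ} (hij : i < j)
    (hj : j ≤ m) : σ j < σ i :=
  strictAnti_of_step (fun i hi => (h.2.2.1 i hi).trans (h.2.2.2.1 i hi.le)) hij hj

lemma Interlace.le {m : ℕ} {σ ρ : ℕ → ℝ} (h : Interlace m σ ρ) {i : ℕ} (hi : i ≤ m) :
    σ i ≤ ρ i := by
  obtain ⟨hσ, hρ, h1, -⟩ := h
  cases i with
  | zero => rw [hσ, hρ]
  | succ i => exact (h1 i hi).le

lemma Interlace.anti_right {m : ℕ} {σ ρ : ℕ → ℝ} (h : Interlace m σ ρ) {i j : ℕ} (hij : i < j)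
    (hj : j ≤ m + 1) : ρ j < ρ i :=
  strictAnti_of_step (fun i hi => (h.2.2.2.1 i (by omega)).trans_le (h.le (by omega))) hij hj

lemma exists_zero_between {f : ℝ[X]} {a b : ℝ} (hab : a < b) {i : ℕ}
    (ha : 0 < (-1) ^ (i + 1) * f.eval a) (hb : 0 < (-1) ^ i * f.eval b) :
    ∃ t, a < t ∧ t < b ∧ f.eval t = 0 := by
  have hc : ContinuousOn (fun x => (-1) ^ i * f.eval x) (Set.Icc a b) := by fun_prop
  have h0 : (0 : ℝ) ∈ Set.Ioo ((-1) ^ i * f.eval a) ((-1) ^ i * f.eval b) :=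
    ⟨by rw [pow_succ] at ha; linarith, hb⟩
  obtain ⟨t, ht, h⟩ := intermediate_value_Ioo hab.le hc h0
  exact ⟨t, ht.1, ht.2, by simpa using h⟩

/-- The Sturm step: a pair of interlacing consecutive terms forces the next pair to interlace. -/
lemma interlace_step {m : ℕ} {σ ρ : ℕ → ℝ} (h : Interlace m σ ρ) :
    ∃ τ, Interlace (m + 1) ρ τ := by
  obtain ⟨hσ, hρ, h1, h2, h3, h4⟩ := id h
  obtain ⟨L, hL, hLs⟩ := exists_far_left (leadingCoeff_minusculeP_pos (m + 2))
    (natDegree_minusculeP (m + 2)) (by omega) (ρ (m + 1))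
  -- At a zero of `minusculeP (m+1)` the recurrence makes the neighbouring terms of opposite sign.
  have sgn : ∀ i ≤ m, 0 < (-1) ^ (i + 1) * (minusculeP (m + 2)).eval (ρ (i + 1)) := by
    intro i hi
    have s := sign_of_position (leadingCoeff_minusculeP_pos m) (natDegree_minusculeP m)
      (fun j => σ (j + 1)) (fun a b hab hb => h.anti_left (by omega) (by omega)) h3
      (x := ρ (i + 1)) (i := i) hi
      (fun j hj => (h2 i hi).trans_le (by
        rcases (show j + 1 = i ∨ j + 1 < i by omega) with rfl | h'
        · exact le_rfl
        · exact (h.anti_left h' hi).le))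
      (fun j hj hjm => (h1 j hjm).trans_le (by
        rcases (show i = j ∨ i < j by omega) with rfl | h'
        · exact le_rfl
        · exact (h.anti_right (by omega) (by omega)).le))
    have r := minusculeP_rec_eval m (ρ (i + 1))
    rw [h4 i hi] at r
    have hneg : ρ (i + 1) < 0 := by
      rw [← hρ]; exact h.anti_right (by omega) (by omega)
    have hsq : 0 < (1 - ρ (i + 1)) ^ 2 := by
      have : 0 < 1 - ρ (i + 1) := by linarith
      positivity
    have key : ((m : ℝ) + 2) * ((-1) ^ (i + 1) * (minusculeP (m + 2)).eval (ρ (i + 1))) =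
        ((m : ℝ) + 4) * ((1 - ρ (i + 1)) ^ 2 * ((-1) ^ i * (minusculeP m).eval (ρ (i + 1)))) := by
      rw [pow_succ]; linear_combination (-(-1) ^ i) * r
    have : 0 < ((m : ℝ) + 2) * ((-1) ^ (i + 1) * (minusculeP (m + 2)).eval (ρ (i + 1))) := by
      rw [key]; positivity
    exact pos_of_mul_pos_right this (by positivity)
  -- The endpoints of the `m + 2` gaps: `0`, the zeros of `minusculeP (m+1)`, and a far point `L`.
  let b : ℕ → ℝ := fun i => if i ≤ m + 1 then ρ i else L
  have hb : ∀ i ≤ m + 1, b i = ρ i := fun i hi => if_pos hi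
  have hbL : b (m + 2) = L := if_neg (by omega)
  have bs : ∀ i ≤ m + 2, 0 < (-1) ^ i * (minusculeP (m + 2)).eval (b i) := by
    intro i hi
    rcases (show i = m + 2 ∨ i ≤ m + 1 by omega) with rfl | hi
    · rw [hbL]; exact hLs
    · rw [hb i hi]
      cases i with
      | zero => rw [hρ]; simpa using minusculeP_eval_zero_pos (m + 2)
      | succ i => exact sgn i (by omega)
  have bd : ∀ i ≤ m + 1, b (i + 1) < b i := by
    intro i hi
    rw [hb i hi]
    rcases (show i = m + 1 ∨ i + 1 ≤ m + 1 by omega) with rfl | hi'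
    · rw [hbL]; exact hL
    · rw [hb _ hi']; exact h.anti_right (by omega) hi'
  have ex : ∀ i, ∃ t, i ≤ m + 1 → b (i + 1) < t ∧ t < b i ∧ (minusculeP (m + 2)).eval t = 0 := by
    intro i
    by_cases hi : i ≤ m + 1
    · obtain ⟨t, ht⟩ := exists_zero_between (bd i hi) (bs (i + 1) (by omega)) (bs i (by omega))
      exact ⟨t, fun _ => ht⟩
    · exact ⟨0, fun h => absurd h hi⟩
  choose t ht using ex
  refine ⟨fun i => if i = 0 then 0 else t (i - 1), hρ, by simp, ?_, ?_, ?_, ?_⟩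
  · intro i hi
    have := (ht i hi.le).1
    rw [hb (i + 1) hi] at this
    simpa using this
  · intro i hi
    have := (ht i hi).2.1
    rw [hb i hi] at this
    simpa using this
  · intro i hi
    exact h4 i (by omega)
  · intro i hi
    simpa using (ht i hi).2.2

lemma exists_interlace (m : ℕ) : ∃ σ ρ, Interlace m σ ρ := by
  induction m with
  | zero =>
    refine ⟨fun _ => 0, fun i => -i, rfl, by simp, by simp, ?_, by simp, ?_⟩
    · intro i hi; obtain rfl : i = 0 := by omega
      simp
    · intro i hi; obtain rfl : i = 0 := by omega
      simp [minusculeP_one_eval]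
  | succ m ih =>
    obtain ⟨σ, ρ, h⟩ := ih
    exact ⟨ρ, interlace_step h⟩

/-! ### Zeros of the minuscule polynomials -/

lemma roots_minusculeN {m : ℕ} {r : ℕ → ℝ} (h0 : r 0 = 0)
    (hr : ∀ i j, i < j → j < m + 1 → r j < r i)
    (hz : ∀ i < m, (minusculeP m).eval (r (i + 1)) = 0) :
    (minusculeN (m + 2)).roots = (List.ofFn (fun i : Fin (m + 1) => r i) : List ℝ) := by
  rw [← X_mul_minusculeP]
  refine roots_eq_ofFn (mul_ne_zero X_ne_zero (minusculeP_ne_zero m)) ?_ r hr ?_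
  · rw [natDegree_X_mul (minusculeP_ne_zero m), natDegree_minusculeP]
  · intro i hi
    cases i with
    | zero => simp [h0]
    | succ i => simp [hz i (by omega)]

/-- For `n ≥ 2`, the zeros of `N_n` interlace those of `N_{n+1}`: listing the `n` real
zeros of `N_{n+1}` in decreasing order `r 0 ≥ r 1 ≥ ⋯` and the `n-1` real zeros of
`N_n` in decreasing order `s 0 ≥ s 1 ≥ ⋯`, one has
`r_n ≤ s_{n-1} ≤ r_{n-1} ≤ ⋯ ≤ s_1 ≤ r_1`. -/
theorem minusculeN_interlacing (n : ℕ) (hn : 2 ≤ n) :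
    ∃ (r : Fin n → ℝ) (s : Fin (n - 1) → ℝ),
      Antitone r ∧ Antitone s ∧
      (minusculeN (n + 1)).roots = (List.ofFn r : List ℝ) ∧
      (minusculeN n).roots = (List.ofFn s : List ℝ) ∧
      ∀ i : Fin (n - 1),
        r ⟨i.val + 1, by have := i.isLt; omega⟩ ≤ s i ∧
        s i ≤ r ⟨i.val, by have := i.isLt; omega⟩ := by
  obtain ⟨m, rfl⟩ : ∃ m, n = m + 2 := ⟨n - 2, by omega⟩
  obtain ⟨σ, ρ, h⟩ := exists_interlace m
  refine ⟨fun i => ρ i, fun i => σ i, ?_, ?_, ?_, ?_, ?_⟩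
  · intro i j hij
    rcases hij.eq_or_lt with rfl | hij
    · exact le_rfl
    · exact (h.anti_right hij (by have := j.isLt; omega)).le
  · intro i j hij
    rcases hij.eq_or_lt with rfl | hij
    · exact le_rfl
    · exact (h.anti_left hij (by have := j.isLt; omega)).le
  · exact roots_minusculeN (m := m + 1) h.2.1 (fun i j hij hj => h.anti_right hij (by omega))
      (fun i hi => h.2.2.2.2.2 i (by omega))
  · exact roots_minusculeN h.1 (fun i j hij hj => h.anti_left hij (by omega)) h.2.2.2.2.1
  · intro i
    have hi : i.val ≤ m := by have := i.isLt; omega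
    exact ⟨(h.2.2.2.1 i hi).le, h.le hi⟩
end

section
/- For each n ∈ ℕ there exist nonnegative integers γ_{n,0}, γ_{n,1}, …, γ_{n,⌊n/2⌋} such that N_n(x) = ∑_{k=0}^{⌊n/2⌋} γ_{n,k} x^k (1+x)^{n-2k} as polynomials (gamma-positivity of N_n). -/
open Polynomial in
/-- The Euler operator `D = x d/dx`, as a linear map. -/
noncomputable def eulerD : ℝ[X] →ₗ[ℝ] ℝ[X] :=
  LinearMap.mulLeft ℝ (X : ℝ[X]) ∘ₗ Polynomial.derivative

open Polynomial in
/-- The operator `D (n - D)`, which multiplies `x^k` by `k (n - k)`. -/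
noncomputable def eulerOp (n : ℕ) : ℝ[X] →ₗ[ℝ] ℝ[X] :=
  (n : ℝ) • eulerD - eulerD ∘ₗ eulerD

open Polynomial in
theorem eulerD_apply (p : ℝ[X]) : eulerD p = X * derivative p := rfl

open Polynomial in
theorem eulerOp_apply (n : ℕ) (p : ℝ[X]) :
    eulerOp n p = C (n : ℝ) * eulerD p - eulerD (eulerD p) := by
  simp [eulerOp, smul_eq_C_mul]

open Polynomial in
theorem eulerD_C_mul (c : ℝ) (p : ℝ[X]) : eulerD (C c * p) = C c * eulerD p := by
  rw [← smul_eq_C_mul, map_smul, smul_eq_C_mul]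

open Polynomial in
theorem eulerOp_C_mul (n : ℕ) (c : ℝ) (p : ℝ[X]) : eulerOp n (C c * p) = C c * eulerOp n p := by
  rw [← smul_eq_C_mul, map_smul, smul_eq_C_mul]

open Polynomial in
theorem eulerD_X_pow (k : ℕ) : eulerD (X ^ k) = C (k : ℝ) * X ^ k := by
  cases k with
  | zero => simp [eulerD_apply]
  | succ k => simp [eulerD_apply]; ring

open Polynomial in
theorem eulerOp_X_pow (n k : ℕ) :
    eulerOp n (X ^ k) = C ((k : ℝ) * (n - k)) * X ^ k := by
  rw [eulerOp_apply, eulerD_X_pow, eulerD_C_mul, eulerD_X_pow]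
  simp only [map_mul, map_sub]
  ring

open Polynomial in
/-- The subtraction `m - 1` truncates only at `m = 0`, where the coefficient `m` vanishes. -/
theorem eulerD_mixed (i m : ℕ) :
    eulerD (X ^ i * (1 + X) ^ m) =
      C (i : ℝ) * (X ^ i * (1 + X) ^ m) + C (m : ℝ) * (X ^ (i + 1) * (1 + X) ^ (m - 1)) := by
  have h := eulerD_X_pow i
  rw [eulerD_apply] at h
  have h2 : derivative ((1 + X : ℝ[X]) ^ m) = C (m : ℝ) * (1 + X) ^ (m - 1) := by
    rw [derivative_pow]; simp
  rw [eulerD_apply, derivative_mul, h2]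
  linear_combination (1 + X) ^ m * h

open Polynomial in
/-- The exponent `n - 2 * (i + 1)` truncates only when the coefficient `(n - 2i)(n - 2i - 1)`
vanishes. -/
theorem eulerOp_gammaBasis (n i : ℕ) (h : 2 * i ≤ n) :
    eulerOp n (X ^ i * (1 + X) ^ (n - 2 * i)) =
      C ((i : ℝ) * (n - i)) * (X ^ i * (1 + X) ^ (n - 2 * i)) +
      C (((n : ℝ) - 2 * i) * (n - 2 * i - 1)) *
        (X ^ (i + 1) * (1 + X) ^ (n - 2 * (i + 1))) := by
  obtain ⟨m, rfl⟩ := Nat.exists_eq_add_of_le h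
  have e1 : 2 * i + m - 2 * i = m := by omega
  have e2 : 2 * i + m - 2 * (i + 1) = m - 2 := by omega
  rw [eulerOp_apply, e1, e2]
  simp only [eulerD_mixed, map_add, eulerD_C_mul]
  have h2 : (C (2 : ℝ) : ℝ[X]) = 2 := rfl
  rcases m with _ | _ | m
  · simp [h2]; ring
  · simp [h2]; ring
  · simp only [Nat.add_sub_cancel, show m + 1 + 1 - 1 = m + 1 by omega,
      show m + 1 + 1 - 2 = m by omega]
    simp [h2]
    ring

theorem sum_range_even_odd {R : Type*} [CommRing R] (f : ℕ → R) (M : ℕ) :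
    ∑ k ∈ Finset.range (2 * M), f k = ∑ j ∈ Finset.range M, (f (2 * j) + f (2 * j + 1)) := by
  induction M with
  | zero => simp
  | succ M ih =>
    rw [show 2 * (M + 1) = 2 * M + 1 + 1 by ring, Finset.sum_range_succ, Finset.sum_range_succ, ih,
      Finset.sum_range_succ]
    ring

theorem add_pow_sub_sub_pow {R : Type*} [CommRing R] (a b : R) (m M : ℕ) (h : m + 1 ≤ 2 * M) :
    (b + a) ^ m - (-b + a) ^ m =
      ∑ j ∈ Finset.range M, 2 * (b ^ (2 * j + 1) * a ^ (m - (2 * j + 1)) *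
        (m.choose (2 * j + 1) : R)) := by
  have key : ∀ c : R, (c + a) ^ m =
      ∑ k ∈ Finset.range (2 * M), c ^ k * a ^ (m - k) * (m.choose k : R) := by
    intro c
    rw [add_pow]
    refine Finset.sum_subset (Finset.range_mono h) ?_
    intro k _ hk
    rw [Nat.choose_eq_zero_of_lt (by simpa using hk)]
    simp
  rw [key, key, ← Finset.sum_sub_distrib, sum_range_even_odd]
  refine Finset.sum_congr rfl fun j _ => ?_
  simp only [pow_succ, pow_mul]
  ring

open Polynomial in
/-- The gamma expansion of `∑ k, C(2n+2, 2k+1) x^k`.  It is checked after the injective substitution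
`x = s²`, where both sides times `2 s` are `(1+s)^(2n+2) - (1-s)^(2n+2)`. -/
theorem oddBinomial_eq (n : ℕ) :
    ∑ k ∈ Finset.range (n + 1), C ((Nat.choose (2 * n + 2) (2 * k + 1) : ℕ) : ℝ) * X ^ k =
      ∑ i ∈ Finset.range (n + 1), C (2 * 4 ^ i * ((n + 1).choose (2 * i + 1) : ℝ)) *
        (X ^ i * (1 + X) ^ (n - 2 * i)) := by
  apply expand_injective (R := ℝ) (n := 2) (by norm_num)
  apply mul_left_cancel₀ (b := _) (show (2 * X : ℝ[X]) ≠ 0 by simp)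
  have h1 := add_pow_sub_sub_pow (1 : ℝ[X]) X (2 * n + 2) (n + 2) (by omega)
  have h2 := add_pow_sub_sub_pow (1 + X ^ 2 : ℝ[X]) (2 * X) (n + 1) (n + 1) (by omega)
  have h3 : (X + 1 : ℝ[X]) ^ (2 * n + 2) - (-X + 1) ^ (2 * n + 2) =
      (2 * X + (1 + X ^ 2)) ^ (n + 1) - (-(2 * X) + (1 + X ^ 2)) ^ (n + 1) := by
    rw [show 2 * n + 2 = 2 * (n + 1) by ring, pow_mul, pow_mul]
    ring
  rw [h1, h2, Finset.sum_range_succ, Nat.choose_eq_zero_of_lt (show 2 * n + 2 < 2 * (n + 1) + 1 by omega)]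
    at h3
  simp only [map_sum, Finset.mul_sum]
  rw [Nat.cast_zero, mul_zero, mul_zero, add_zero] at h3
  convert h3 using 1
  · refine Finset.sum_congr rfl fun j _ => ?_
    simp
    ring
  · refine Finset.sum_congr rfl fun j _ => ?_
    rw [show n + 1 - (2 * j + 1) = n - 2 * j by omega]
    have h4 : (4 : ℝ[X]) ^ j = 2 ^ (2 * j) := by rw [pow_mul]; norm_num
    have h5 : (C (4 : ℝ) : ℝ[X]) = 4 := rfl
    have h6 : (C (2 : ℝ) : ℝ[X]) = 2 := rfl
    have h7 : expand ℝ 2 (2 : ℝ[X]) = 2 := map_ofNat _ 2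
    simp [h5, h6, h4, h7]
    ring

theorem choose_step (n i : ℕ) (h : 2 * i ≤ n) :
    ((n + 1).choose (2 * (i + 1) + 1) : ℝ) * ((2 * i + 3) * (2 * i + 2)) =
      ((n + 1).choose (2 * i + 1) : ℝ) * ((n - 2 * i) * (n - 2 * i - 1)) := by
  obtain ⟨m, rfl⟩ := Nat.exists_eq_add_of_le h
  have h1 := Nat.choose_succ_right_eq (2 * i + m + 1) (2 * i + 1)
  have h2 := Nat.choose_succ_right_eq (2 * i + m + 1) (2 * i + 2)
  rw [show 2 * i + m + 1 - (2 * i + 1) = m by omega] at h1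
  rw [show 2 * i + m + 1 - (2 * i + 2) = m - 1 by omega] at h2
  rw [show 2 * (i + 1) + 1 = 2 * i + 2 + 1 by ring]
  have h3 : (m : ℝ) * ((m - 1 : ℕ) : ℝ) = m * (m - 1) := by
    cases m <;> simp
  have h1' := congrArg (Nat.cast : ℕ → ℝ) h1
  have h2' := congrArg (Nat.cast : ℕ → ℝ) h2
  push_cast at h1' h2' ⊢
  rw [show 2 * i + 1 + 1 = 2 * i + 2 by ring] at h1'
  linear_combination (2 * (i : ℝ) + 2) * h2' + ((m - 1 : ℕ) : ℝ) * h1' +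
    ((2 * i + m + 1).choose (2 * i + 1) : ℝ) * h3

open Polynomial in
/-- Partial sums of the operator applied to the gamma expansion: besides the expected terms, the
boundary term `i (2i+1) 4^i C(n+1, 2i+1) g_i` at `i = M` is left over, coming from index `M - 1`. -/
theorem eulerOp_partial (n M : ℕ) :
    ∑ i ∈ Finset.range M, eulerOp n (C (2 * 4 ^ i * ((n + 1).choose (2 * i + 1) : ℝ)) *
        (X ^ i * (1 + X) ^ (n - 2 * i))) =
      ∑ i ∈ Finset.range M, C ((2 * n + 1) * (i * 4 ^ i * ((n + 1).choose (2 * i + 1) : ℝ))) *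
        (X ^ i * (1 + X) ^ (n - 2 * i)) +
      C ((M : ℝ) * (2 * M + 1) * 4 ^ M * ((n + 1).choose (2 * M + 1) : ℝ)) *
        (X ^ M * (1 + X) ^ (n - 2 * M)) := by
  induction M with
  | zero => simp
  | succ M ih =>
    rw [Finset.sum_range_succ, Finset.sum_range_succ, ih, eulerOp_C_mul]
    by_cases h : 2 * M ≤ n
    · rw [eulerOp_gammaBasis n M h]
      have hc := choose_step n M h
      have e : ((M + 1 : ℕ) : ℝ) * (2 * ((M + 1 : ℕ) : ℝ) + 1) * 4 ^ (M + 1) *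
          ((n + 1).choose (2 * (M + 1) + 1) : ℝ) =
          2 * 4 ^ M * ((n + 1).choose (2 * M + 1) : ℝ) * (((n : ℝ) - 2 * M) * (n - 2 * M - 1)) := by
        push_cast
        linear_combination 2 * 4 ^ M * hc
      rw [e]
      simp only [map_mul, map_add, map_sub, map_one]
      have h6 : (C (2 : ℝ) : ℝ[X]) = 2 := rfl
      rw [h6]
      ring
    · rw [Nat.choose_eq_zero_of_lt (show n + 1 < 2 * M + 1 by omega),
        Nat.choose_eq_zero_of_lt (show n + 1 < 2 * (M + 1) + 1 by omega)]
      simp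

open Polynomial in
theorem minusculeN_eq_eulerOp (n : ℕ) :
    C (4 * (n : ℝ) + 2) * minusculeN n =
      eulerOp n (∑ k ∈ Finset.range (n + 1),
        C ((Nat.choose (2 * n + 2) (2 * k + 1) : ℕ) : ℝ) * X ^ k) := by
  have hne : (4 * (n : ℝ) + 2) ≠ 0 := by positivity
  rw [minusculeN, map_sum, Finset.mul_sum]
  -- the terms `k = 0` and `k = n` are killed by the factor `k (n - k)`
  have hsub : Finset.Icc 1 (n - 1) ⊆ Finset.range (n + 1) := by
    intro k hk
    simp only [Finset.mem_Icc, Finset.mem_range] at hk ⊢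
    omega
  rw [← Finset.sum_subset hsub]
  · refine Finset.sum_congr rfl fun k hk => ?_
    have hk' : k ≤ n := by
      simp only [Finset.mem_Icc] at hk
      omega
    rw [eulerOp_C_mul, eulerOp_X_pow, ← mul_assoc, ← mul_assoc, ← C_mul, ← C_mul]
    congr 2
    rw [mul_div_cancel₀ _ hne]
    push_cast [Nat.cast_sub hk']
    ring
  · intro k hk hk'
    have : k = 0 ∨ k = n := by
      simp only [Finset.mem_Icc, Finset.mem_range] at hk hk'
      omega
    rw [eulerOp_C_mul, eulerOp_X_pow]
    rcases this with rfl | rfl <;> simp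

/-- Gamma-positivity of `N_n`: there are nonnegative integers `γ_{n,k}` with
`N_n(x) = ∑_{k=0}^{⌊n/2⌋} γ_{n,k} x^k (1+x)^{n-2k}`. -/
theorem minusculeN_gamma_positive (n : ℕ) :
    ∃ γ : ℕ → ℕ,
      minusculeN n =
        ∑ k ∈ Finset.range (n / 2 + 1),
          Polynomial.C ((γ k : ℝ)) * Polynomial.X ^ k * (1 + Polynomial.X) ^ (n - 2 * k) := by
  -- at `k = 0` the exponent `2 * k - 1` truncates, but the factor `k` is zero
  refine ⟨fun k => k * 2 ^ (2 * k - 1) * (n + 1).choose (2 * k + 1), ?_⟩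
  have hne : (4 * (n : ℝ) + 2) ≠ 0 := by positivity
  apply mul_left_cancel₀ (Polynomial.C_ne_zero.mpr hne)
  rw [minusculeN_eq_eulerOp, oddBinomial_eq, map_sum, eulerOp_partial]
  have hz : (((n + 1 : ℕ) : ℝ)) * (2 * ((n + 1 : ℕ) : ℝ) + 1) * 4 ^ (n + 1) *
      ((n + 1).choose (2 * (n + 1) + 1) : ℝ) = 0 := by
    rw [Nat.choose_eq_zero_of_lt (by omega)]; simp
  rw [hz, Polynomial.C_0, zero_mul, add_zero, Finset.mul_sum]
  have hsub : Finset.range (n / 2 + 1) ⊆ Finset.range (n + 1) :=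
    Finset.range_mono (by omega)
  rw [← Finset.sum_subset hsub]
  · refine Finset.sum_congr rfl fun k _ => ?_
    rw [mul_assoc (Polynomial.C _) (Polynomial.X ^ k), ← mul_assoc (Polynomial.C _) (Polynomial.C _),
      ← Polynomial.C_mul]
    congr 2
    cases k with
    | zero => simp
    | succ k =>
      have h4 : (4 : ℝ) ^ (k + 1) = 2 * 2 ^ (2 * (k + 1) - 1) := by
        rw [show 2 * (k + 1) - 1 = 2 * k + 1 by omega, pow_succ, pow_succ, pow_mul]
        norm_num
        ring
      rw [h4]
      push_cast
      ring
  · intro k _ hk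
    rw [Nat.choose_eq_zero_of_lt (by simp at hk; omega)]
    simp
end

section
/- For every n ∈ ℕ with n ≥ 1 and every real x ≠ 0, N_n(x²) = ((n+1)/8)·((1+x)^{2n} + (1-x)^{2n}) − (1/(16x))·((1+x)^{2n+2} − (1-x)^{2n+2}). -/
/-- The binomial theorem for `1 + x`, with the sum padded by vanishing terms to `2 * m` terms and grouped
into consecutive even and odd powers. -/
lemma one_add_pow_eq_pairs (x : ℝ) (N m : ℕ) (h : N < 2 * m) :
    (1 + x) ^ N = ∑ k ∈ Finset.range m,
      ((N.choose (2 * k) : ℝ) * x ^ (2 * k) + (N.choose (2 * k + 1) : ℝ) * x ^ (2 * k + 1)) := by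
  have pairs : ∀ m : ℕ, ∑ i ∈ Finset.range (2 * m), (N.choose i : ℝ) * x ^ i =
      ∑ k ∈ Finset.range m,
        ((N.choose (2 * k) : ℝ) * x ^ (2 * k) +
          (N.choose (2 * k + 1) : ℝ) * x ^ (2 * k + 1)) := by
    intro m
    induction m with
    | zero => simp
    | succ m ih =>
      rw [Finset.sum_range_succ _ m, ← ih, show 2 * (m + 1) = 2 * m + 1 + 1 by ring,
        Finset.sum_range_succ, Finset.sum_range_succ, add_assoc]
  rw [← pairs, add_comm 1 x, add_pow]
  have hsub : Finset.range (N + 1) ⊆ Finset.range (2 * m) :=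
    Finset.range_subset_range.mpr h
  rw [← Finset.sum_subset hsub]
  · exact Finset.sum_congr rfl fun i _ => by rw [one_pow]; ring
  · intro i _ hi
    rw [Nat.choose_eq_zero_of_lt (by simpa using hi)]
    simp

lemma even_part (x : ℝ) (n : ℕ) :
    (1 + x) ^ (2 * n) + (1 - x) ^ (2 * n) =
      2 * ∑ k ∈ Finset.range (n + 1), ((2 * n).choose (2 * k) : ℝ) * (x ^ 2) ^ k := by
  rw [sub_eq_add_neg, one_add_pow_eq_pairs x (2 * n) (n + 1) (by omega),
    one_add_pow_eq_pairs (-x) (2 * n) (n + 1) (by omega), ← Finset.sum_add_distrib,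
    Finset.mul_sum]
  refine Finset.sum_congr rfl fun k _ => ?_
  simp only [pow_succ (-x), pow_succ x (2 * k), pow_mul]
  ring

lemma odd_part (x : ℝ) (n : ℕ) :
    (1 + x) ^ (2 * n + 2) - (1 - x) ^ (2 * n + 2) =
      2 * x * ∑ k ∈ Finset.range (n + 1),
        ((2 * n + 2).choose (2 * k + 1) : ℝ) * (x ^ 2) ^ k := by
  rw [sub_eq_add_neg 1 x, one_add_pow_eq_pairs x (2 * n + 2) (n + 2) (by omega),
    one_add_pow_eq_pairs (-x) (2 * n + 2) (n + 2) (by omega), ← Finset.sum_sub_distrib,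
    Finset.mul_sum, Finset.sum_range_succ]
  -- In the last pair the even terms cancel and the odd coefficient is `C(2n+2, 2n+3) = 0`.
  rw [Nat.choose_eq_zero_of_lt (show 2 * n + 2 < 2 * (n + 1) + 1 by omega)]
  simp only [Nat.cast_zero, zero_mul, add_zero, pow_mul, neg_sq, sub_self]
  refine Finset.sum_congr rfl fun k _ => ?_
  simp only [pow_succ (-x), pow_succ x (2 * k), pow_mul]
  ring

lemma choose_absorb (n k : ℕ) (hk : k ≤ n) :
    ((2 * n + 2).choose (2 * k + 1) : ℝ) * ((2 * k + 1) * (2 * n - 2 * k + 1)) =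
      (2 * n + 2) * (2 * n + 1) * ((2 * n).choose (2 * k) : ℝ) := by
  obtain ⟨j, rfl⟩ := Nat.exists_eq_add_of_le hk
  have h1 := Nat.add_one_mul_choose_eq (2 * (k + j) + 1) (2 * k)
  have h2 := Nat.choose_mul_succ_eq (2 * (k + j)) (2 * k)
  rw [show 2 * (k + j) + 1 - 2 * k = 2 * j + 1 by omega] at h2
  have h1' : (2 * ((k : ℝ) + j) + 1 + 1) * ((2 * (k + j) + 1).choose (2 * k) : ℝ) =
      ((2 * (k + j) + 2).choose (2 * k + 1) : ℝ) * (2 * k + 1) := by exact_mod_cast h1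
  have h2' : ((2 * (k + j)).choose (2 * k) : ℝ) * (2 * ((k : ℝ) + j) + 1) =
      ((2 * (k + j) + 1).choose (2 * k) : ℝ) * (2 * j + 1) := by exact_mod_cast h2
  push_cast
  linear_combination (-(2 * (j : ℝ) + 1)) * h1' - (2 * ((k : ℝ) + j) + 2) * h2'

lemma minuscule_coeff (n k : ℕ) (hk : k ≤ n) :
    ((k * (n - k) * Nat.choose (2 * n + 2) (2 * k + 1) : ℕ) : ℝ) / (4 * (n : ℝ) + 2) =
      ((n : ℝ) + 1) / 4 * ((2 * n).choose (2 * k) : ℝ) -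
        1 / 8 * ((2 * n + 2).choose (2 * k + 1) : ℝ) := by
  have h := choose_absorb n k hk
  have hpos : (4 * (n : ℝ) + 2) ≠ 0 := by positivity
  rw [div_eq_iff hpos]
  push_cast [Nat.cast_sub hk]
  linear_combination h / 4

/-- For `n ≥ 1` and real `x ≠ 0`,
`N_n(x²) = ((n+1)/8)((1+x)^{2n} + (1-x)^{2n}) − (1/(16x))((1+x)^{2n+2} − (1-x)^{2n+2})`. -/
theorem minusculeN_eval_sq (n : ℕ) (hn : 1 ≤ n) (x : ℝ) (hx : x ≠ 0) :
    (minusculeN n).eval (x ^ 2) =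
      ((n : ℝ) + 1) / 8 * ((1 + x) ^ (2 * n) + (1 - x) ^ (2 * n)) -
        1 / (16 * x) * ((1 + x) ^ (2 * n + 2) - (1 - x) ^ (2 * n + 2)) := by
  have hsum : (minusculeN n).eval (x ^ 2) = ∑ k ∈ Finset.range (n + 1),
      ((k * (n - k) * Nat.choose (2 * n + 2) (2 * k + 1) : ℕ) : ℝ) / (4 * (n : ℝ) + 2) *
        (x ^ 2) ^ k := by
    simp only [minusculeN, Polynomial.eval_finsetSum, Polynomial.eval_mul, Polynomial.eval_C,
      Polynomial.eval_pow, Polynomial.eval_X]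
    refine Finset.sum_subset (fun k hk => ?_) (fun k hk hk' => ?_)
    · simp only [Finset.mem_Icc, Finset.mem_range] at hk ⊢
      omega
    · -- Only `k = 0` and `k = n` are added, and there `k * (n - k) = 0`.
      simp only [Finset.mem_Icc, Finset.mem_range] at hk hk'
      have h0 : k = 0 ∨ k = n := by omega
      rcases h0 with rfl | rfl <;> simp
  have hcoeff : ∀ k ∈ Finset.range (n + 1),
      ((k * (n - k) * Nat.choose (2 * n + 2) (2 * k + 1) : ℕ) : ℝ) / (4 * (n : ℝ) + 2) *
        (x ^ 2) ^ k =
      ((n : ℝ) + 1) / 4 * (((2 * n).choose (2 * k) : ℝ) * (x ^ 2) ^ k) -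
        1 / 8 * (((2 * n + 2).choose (2 * k + 1) : ℝ) * (x ^ 2) ^ k) := by
    intro k hk
    rw [minuscule_coeff n k (by simpa [Nat.lt_succ_iff] using hk)]
    ring
  rw [hsum, Finset.sum_congr rfl hcoeff, Finset.sum_sub_distrib, ← Finset.mul_sum,
    ← Finset.mul_sum, even_part, odd_part]
  field_simp
  ring
end

section
/- For every real x ≠ 0 and every real z, ∑_{n=0}^{∞} N_n(x²) zⁿ/n! = ((2x(1+x)²z − 1 − x²)/(16x))·e^{(1+x)²z} + ((2x(1-x)²z + 1 + x²)/(16x))·e^{(1-x)²z}, the series on the left converging absolutely. -/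
lemma sum_range_two_mul (f : ℕ → ℝ) (m : ℕ) :
    ∑ i ∈ Finset.range (2 * m), f i = ∑ k ∈ Finset.range m, (f (2 * k) + f (2 * k + 1)) := by
  induction m with
  | zero => simp
  | succ m ih =>
    rw [Finset.sum_range_succ, ← ih, show 2 * (m + 1) = 2 * m + 1 + 1 by ring,
      Finset.sum_range_succ, Finset.sum_range_succ]
    ring

lemma one_add_pow_eq_sum (y : ℝ) (N : ℕ) :
    (1 + y) ^ N = ∑ i ∈ Finset.range (N + 1), (N.choose i : ℝ) * y ^ i := by
  rw [add_comm 1 y, add_pow]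
  exact Finset.sum_congr rfl fun i _ => by ring

/-- The even part of the binomial expansion of `(1 + x) ^ (2 * n)`. -/
lemma sum_choose_even (x : ℝ) (n : ℕ) :
    2 * ∑ k ∈ Finset.range (n + 1), ((2 * n).choose (2 * k) : ℝ) * x ^ (2 * k) =
      (1 + x) ^ (2 * n) + (1 - x) ^ (2 * n) := by
  -- The upper index may be raised to `2 * n + 1`, where the binomial coefficient is zero.
  have h (y : ℝ) : (1 + y) ^ (2 * n) =
      ∑ i ∈ Finset.range (2 * (n + 1)), ((2 * n).choose i : ℝ) * y ^ i := by
    rw [show 2 * (n + 1) = 2 * n + 1 + 1 by ring, Finset.sum_range_succ, one_add_pow_eq_sum]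
    simp
  rw [sub_eq_add_neg, h x, h (-x), sum_range_two_mul, sum_range_two_mul, Finset.mul_sum,
    ← Finset.sum_add_distrib]
  refine Finset.sum_congr rfl fun k _ => ?_
  have : (-x) ^ (2 * k) = x ^ (2 * k) := by rw [pow_mul, neg_sq, ← pow_mul]
  rw [pow_succ, pow_succ, this]
  ring

/-- The odd part of the binomial expansion of `(1 + x) ^ (2 * n + 2)`. -/
lemma sum_choose_odd (x : ℝ) (n : ℕ) :
    2 * ∑ k ∈ Finset.range (n + 1), ((2 * n + 2).choose (2 * k + 1) : ℝ) * x ^ (2 * k + 1) =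
      (1 + x) ^ (2 * n + 2) - (1 - x) ^ (2 * n + 2) := by
  have hneg (k : ℕ) : (-x) ^ (2 * k) = x ^ (2 * k) := by rw [pow_mul, neg_sq, ← pow_mul]
  rw [sub_eq_add_neg 1 x, one_add_pow_eq_sum x, one_add_pow_eq_sum (-x),
    show 2 * n + 2 = 2 * (n + 1) by ring, Finset.sum_range_succ _ (2 * (n + 1)),
    Finset.sum_range_succ _ (2 * (n + 1)), hneg, add_sub_add_right_eq_sub, sum_range_two_mul, sum_range_two_mul,
    Finset.mul_sum, ← Finset.sum_sub_distrib]
  refine Finset.sum_congr rfl fun k _ => ?_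
  rw [pow_succ (-x), hneg]
  ring

lemma choose_relation {n k : ℕ} (hk : k ≤ n) :
    ((2 * n + 2).choose (2 * k + 1) : ℝ) * ((2 * k + 1) * (2 * n - 2 * k + 1)) =
      (2 * n + 2) * (2 * n + 1) * (2 * n).choose (2 * k) := by
  have h1 := Nat.add_one_mul_choose_eq (2 * n + 1) (2 * k)
  have h2 := Nat.choose_mul_succ_eq (2 * n) (2 * k)
  have h3 : ((2 * n + 1 - 2 * k : ℕ) : ℝ) = 2 * n - 2 * k + 1 := by
    rw [Nat.cast_sub (by omega)]; push_cast; ring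
  have h1' : ((2 * n + 1 + 1 : ℝ)) * ((2 * n + 1).choose (2 * k)) =
      (2 * n + 1 + 1).choose (2 * k + 1) * (2 * k + 1) := by exact_mod_cast h1
  have h2' : ((2 * n).choose (2 * k) : ℝ) * (2 * n + 1) =
      (2 * n + 1).choose (2 * k) * (2 * n - 2 * k + 1) := by
    rw [← h3]; exact_mod_cast h2
  rw [show 2 * n + 2 = 2 * n + 1 + 1 by ring]
  linear_combination (-(2 * n - 2 * k + 1 : ℝ)) * h1' - (2 * n + 2 : ℝ) * h2'

/-- The defining sum may be taken over `0 ≤ k ≤ n`, as the factor `k * (n - k)` kills both ends. -/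
lemma minusculeN_eval (y : ℝ) (n : ℕ) :
    (minusculeN n).eval y = ∑ k ∈ Finset.range (n + 1),
      (k * (n - k) * (2 * n + 2).choose (2 * k + 1) : ℝ) / (4 * n + 2) * y ^ k := by
  have h : (minusculeN n).eval y = ∑ k ∈ Finset.Icc 1 (n - 1),
      (((k * (n - k) * Nat.choose (2 * n + 2) (2 * k + 1) : ℕ) : ℝ) / (4 * (n : ℝ) + 2)) *
        y ^ k := by
    simp [minusculeN, Polynomial.eval_finsetSum]
  rw [h, Finset.sum_subset (s₂ := Finset.range (n + 1))]
  · refine Finset.sum_congr rfl fun k hk => ?_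
    have hk' : k ≤ n := by simpa [Nat.lt_succ_iff] using hk
    push_cast [Nat.cast_sub hk']
    rfl
  · intro k hk
    simp only [Finset.mem_Icc, Finset.mem_range] at *
    omega
  · intro k hk hk'
    simp only [Finset.mem_Icc, Finset.mem_range] at *
    have : k = 0 ∨ n - k = 0 := by omega
    rcases this with h0 | h0 <;> simp [h0]

/-- Closed form for `N_n(x²)`. Termwise it is the identity
`16 k (n - k) C(2n+2, 2k+1) / (4n+2) = (4n+4) C(2n, 2k) - 2 C(2n+2, 2k+1)`. -/
lemma minusculeN_closed (x : ℝ) (n : ℕ) :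
    16 * x * (minusculeN n).eval (x ^ 2) =
      (2 * n * x - 1 - x ^ 2) * ((1 + x) ^ 2) ^ n +
        (2 * n * x + 1 + x ^ 2) * ((1 - x) ^ 2) ^ n := by
  have key : 16 * x * (minusculeN n).eval (x ^ 2) =
      (4 * n + 4) * x * ∑ k ∈ Finset.range (n + 1), ((2 * n).choose (2 * k) : ℝ) * x ^ (2 * k) -
      2 * ∑ k ∈ Finset.range (n + 1),
        ((2 * n + 2).choose (2 * k + 1) : ℝ) * x ^ (2 * k + 1) := by
    rw [minusculeN_eval, Finset.mul_sum, Finset.mul_sum, Finset.mul_sum,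
      ← Finset.sum_sub_distrib]
    refine Finset.sum_congr rfl fun k hk => ?_
    have hr := choose_relation (n := n) (k := k) (by simpa [Nat.lt_succ_iff] using hk)
    have hn : (4 * n + 2 : ℝ) ≠ 0 := by positivity
    rw [← pow_mul, pow_succ]
    field_simp
    linear_combination 4 * x * x ^ (2 * k) * hr
  rw [← pow_mul, ← pow_mul]
  have he := sum_choose_even x n
  have ho := sum_choose_odd x n
  rw [pow_add, pow_add] at ho
  linear_combination key + (2 * n + 2) * x * he - ho

lemma hasSum_real_exp (y : ℝ) : HasSum (fun n : ℕ => y ^ n / (n.factorial : ℝ)) (Real.exp y) := by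
  rw [Real.exp_eq_exp_ℝ]
  exact NormedSpace.expSeries_div_hasSum_exp y

lemma hasSum_nat_mul_real_exp (y : ℝ) :
    HasSum (fun n : ℕ => n * (y ^ n / (n.factorial : ℝ))) (y * Real.exp y) := by
  rw [← hasSum_nat_add_iff' 1]
  simp only [Finset.sum_range_one, Nat.cast_zero, zero_mul, sub_zero]
  refine ((hasSum_real_exp y).mul_left y).congr_fun ?_
  intro n
  have : (n.factorial : ℝ) ≠ 0 := by positivity
  have h2 : (n + 1 : ℝ) ≠ 0 := by positivity
  rw [Nat.factorial_succ]
  push_cast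
  field_simp
  ring

/-- Exponential generating function: for real `x ≠ 0` and real `z`, the series
`∑_{n≥0} N_n(x²) zⁿ/n!` converges absolutely and equals
`((2x(1+x)²z − 1 − x²)/(16x)) e^{(1+x)²z} + ((2x(1-x)²z + 1 + x²)/(16x)) e^{(1-x)²z}`. -/
theorem minusculeN_egf (x : ℝ) (hx : x ≠ 0) (z : ℝ) :
    Summable (fun n : ℕ => |(minusculeN n).eval (x ^ 2) * z ^ n / (n.factorial : ℝ)|) ∧
    ∑' n : ℕ, (minusculeN n).eval (x ^ 2) * z ^ n / (n.factorial : ℝ) =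
      (2 * x * (1 + x) ^ 2 * z - 1 - x ^ 2) / (16 * x) * Real.exp ((1 + x) ^ 2 * z) +
        (2 * x * (1 - x) ^ 2 * z + 1 + x ^ 2) / (16 * x) * Real.exp ((1 - x) ^ 2 * z) := by
  have h : HasSum (fun n : ℕ => (minusculeN n).eval (x ^ 2) * z ^ n / (n.factorial : ℝ))
      ((2 * x * (1 + x) ^ 2 * z - 1 - x ^ 2) / (16 * x) * Real.exp ((1 + x) ^ 2 * z) +
        (2 * x * (1 - x) ^ 2 * z + 1 + x ^ 2) / (16 * x) * Real.exp ((1 - x) ^ 2 * z)) := by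
    have hp := hasSum_real_exp ((1 + x) ^ 2 * z)
    have hm := hasSum_real_exp ((1 - x) ^ 2 * z)
    have hp' := hasSum_nat_mul_real_exp ((1 + x) ^ 2 * z)
    have hm' := hasSum_nat_mul_real_exp ((1 - x) ^ 2 * z)
    have key := (((hp'.mul_left (2 * x)).sub (hp.mul_left (1 + x ^ 2))).add
      ((hm'.mul_left (2 * x)).add (hm.mul_left (1 + x ^ 2)))).div_const (16 * x)
    have key' : HasSum (fun n : ℕ => (minusculeN n).eval (x ^ 2) * z ^ n / (n.factorial : ℝ)) _ :=
      key.congr_fun fun n => by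
        rw [eq_div_iff (by simpa using hx)]
        simp only [mul_pow _ z]
        linear_combination z ^ n / (n.factorial : ℝ) * minusculeN_closed x n
    convert key' using 1
    ring
  exact ⟨h.summable.abs, h.tsum_eq⟩
end

section
/- The sequence of type A minuscule polynomials is x-log-concave: for every integer n ≥ 2, every coefficient of the polynomial N_n(x)² − N_{n+1}(x)·N_{n-1}(x) is nonnegative. -/
open Polynomial

/-- The factors `k` and `n - k` make the formula valid for every `k`, in or out of range. -/
lemma coeff_minusculeN_s14 (n k : ℕ) :
    (minusculeN n).coeff k =
      ((k * (n - k) * Nat.choose (2 * n + 2) (2 * k + 1) : ℕ) : ℝ) / (4 * (n : ℝ) + 2) := by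
  unfold minusculeN
  simp only [finsetSum_coeff, coeff_C_mul, coeff_X_pow, mul_ite, mul_one, mul_zero]
  rw [Finset.sum_ite_eq]
  split_ifs with h
  · rfl
  · have : k = 0 ∨ n - k = 0 := by
      simp only [Finset.mem_Icc] at h
      omega
    rcases this with h | h <;> simp [h]

lemma coeff_one_sub_X_pow' (n k : ℕ) :
    ((1 - X : ℝ[X]) ^ n).coeff k = (-1) ^ k * (n.choose k : ℝ) := by
  have h : (1 - X : ℝ[X]) ^ n = ((1 + X : ℝ[X]) ^ n).comp (C (-1) * X) := by
    simp [sub_eq_add_neg]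
  rw [h, comp_C_mul_X_coeff, coeff_one_add_X_pow]
  ring

/-- `(k + 1) (M + 1 - k) C(M+2, k+1) = (M + 2) (M + 1) C(M, k)`. -/
lemma choose_two_step (M k : ℕ) (h : k ≤ M) :
    ((k : ℝ) + 1) * (M + 1 - k) * ((M + 2).choose (k + 1) : ℝ)
      = (M + 2) * (M + 1) * (M.choose k : ℝ) := by
  have h1 : (M + 2) * (M + 1).choose k = (M + 2).choose (k + 1) * (k + 1) :=
    Nat.add_one_mul_choose_eq (M + 1) k
  have h2 : M.choose k * (M + 1) = (M + 1).choose k * (M + 1 - k) :=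
    Nat.choose_mul_succ_eq M k
  have h1' : ((M : ℝ) + 2) * ((M + 1).choose k : ℝ)
      = ((M + 2).choose (k + 1) : ℝ) * (k + 1) := by exact_mod_cast h1
  have h2' : (M.choose k : ℝ) * (M + 1) = ((M + 1).choose k : ℝ) * (M + 1 - k) := by
    have := congrArg (fun t : ℕ => (t : ℝ)) h2
    simp only [Nat.cast_mul] at this
    rw [Nat.cast_sub (by omega)] at this
    push_cast at this
    exact this
  linear_combination (-(M + 1 - k : ℝ)) * h1' - (M + 2 : ℝ) * h2'

lemma expand_minusculeN (n : ℕ) :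
    16 * X * expand ℝ 2 (minusculeN n) =
      2 * ((n : ℝ[X]) + 1) * X * (((1 + X) ^ 2) ^ n + ((1 - X) ^ 2) ^ n)
        - (((1 + X) ^ 2) ^ (n + 1) - ((1 - X) ^ 2) ^ (n + 1)) := by
  have e1 : 16 * X * expand ℝ 2 (minusculeN n) = C 16 * (X * expand ℝ 2 (minusculeN n)) := by
    rw [mul_assoc]; rfl
  have e2 : 2 * ((n : ℝ[X]) + 1) * X * (((1 + X) ^ 2) ^ n + ((1 - X) ^ 2) ^ n)
      = C (2 * ((n : ℝ) + 1)) * (X * ((1 + X) ^ (2 * n) + (1 - X) ^ (2 * n))) := by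
    simp only [C_mul, C_add, C_1, map_natCast, map_ofNat, pow_mul]
    ring
  rw [e1, e2, ← pow_mul, ← pow_mul]
  ext j
  rcases j with _ | j
  · simp [coeff_one_sub_X_pow', coeff_one_add_X_pow]
  simp only [coeff_sub, coeff_add, coeff_C_mul, coeff_X_mul, coeff_one_sub_X_pow',
    coeff_one_add_X_pow, coeff_expand (p := 2) (by norm_num), coeff_minusculeN_s14]
  rcases Nat.even_or_odd' j with ⟨k, rfl | rfl⟩
  · have hdvd : 2 ∣ 2 * k := Dvd.intro k rfl
    rw [if_pos hdvd, Nat.mul_div_cancel_left _ (by norm_num)]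
    simp only [pow_add, pow_mul, pow_one]
    norm_num
    have hn : (4 * (n : ℝ) + 2) ≠ 0 := by positivity
    rcases Nat.lt_or_ge n k with h | h
    · rw [Nat.choose_eq_zero_of_lt (show 2 * n + 2 < 2 * k + 1 by omega),
        Nat.choose_eq_zero_of_lt (show 2 * n < 2 * k by omega),
        Nat.choose_eq_zero_of_lt (show 2 * (n + 1) < 2 * k + 1 by omega)]
      simp
    · have h3 := choose_two_step (2 * n) (2 * k) (by omega)
      rw [Nat.cast_sub h, show 2 * (n + 1) = 2 * n + 2 by ring]
      push_cast at h3
      field_simp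
      linear_combination (4 : ℝ) * h3
  · have hdvd : ¬ 2 ∣ 2 * k + 1 := by omega
    rw [if_neg hdvd]
    simp [pow_add, pow_mul]

/-- The even part of `(1 + s)^(4n)`, as a polynomial in `s²`. -/
noncomputable def evenBinom (n : ℕ) : ℝ[X] :=
  ∑ k ∈ Finset.range (2 * n + 1), C ((Nat.choose (4 * n) (2 * k) : ℕ) : ℝ) * X ^ k

lemma coeff_evenBinom (n k : ℕ) :
    (evenBinom n).coeff k = ((Nat.choose (4 * n) (2 * k) : ℕ) : ℝ) := by
  unfold evenBinom
  simp only [finsetSum_coeff, coeff_C_mul, coeff_X_pow, mul_ite, mul_one, mul_zero]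
  rw [Finset.sum_ite_eq]
  split_ifs with h
  · rfl
  · rw [Finset.mem_range] at h
    rw [Nat.choose_eq_zero_of_lt (by omega)]
    simp

lemma expand_evenBinom (n : ℕ) :
    2 * expand ℝ 2 (evenBinom n) = (1 + X) ^ (4 * n) + (1 - X) ^ (4 * n) := by
  have e1 : 2 * expand ℝ 2 (evenBinom n) = C 2 * expand ℝ 2 (evenBinom n) := rfl
  rw [e1]
  ext j
  simp only [coeff_add, coeff_C_mul, coeff_one_sub_X_pow',
    coeff_one_add_X_pow, coeff_expand (p := 2) (by norm_num), coeff_evenBinom]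
  rcases Nat.even_or_odd' j with ⟨k, rfl | rfl⟩
  · have hdvd : 2 ∣ 2 * k := Dvd.intro k rfl
    rw [if_pos hdvd, Nat.mul_div_cancel_left _ (by norm_num)]
    simp only [pow_mul]
    norm_num
    ring
  · have hdvd : ¬ 2 ∣ 2 * k + 1 := by omega
    rw [if_neg hdvd]
    simp [pow_add, pow_mul]

/-- The closed form of `N_n² - N_{n+1} N_{n-1}` for `n = p + 1`. -/
lemma minuscule_diff (p : ℕ) :
    32 * ((minusculeN (p + 1)) ^ 2 - minusculeN (p + 2) * minusculeN p) =
      evenBinom (p + 1) -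
        (1 - X) ^ (2 * p) * (1 + (8 * ((p : ℝ[X]) + 1) ^ 2 - 2) * X + X ^ 2) := by
  apply expand_injective (R := ℝ) (n := 2) (by norm_num)
  have h0 := expand_minusculeN p
  have h1 := expand_minusculeN (p + 1)
  have h2 := expand_minusculeN (p + 2)
  have h3 := expand_evenBinom (p + 1)
  simp only [map_sub, map_mul, map_add, map_pow, map_one, map_natCast, map_ofNat, expand_X]
  generalize expand ℝ 2 (minusculeN p) = A0 at *
  generalize expand ℝ 2 (minusculeN (p + 1)) = A1 at *
  generalize expand ℝ 2 (minusculeN (p + 2)) = A2 at *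
  generalize expand ℝ 2 (evenBinom (p + 1)) = S at *
  have hX : (8 * X ^ 2 : ℝ[X]) ≠ 0 := mul_ne_zero (by norm_num) (pow_ne_zero _ X_ne_zero)
  apply mul_left_cancel₀ hX
  have hq : (8 * X ^ 2 : ℝ[X]) * (32 * (A1 ^ 2 - A2 * A0))
      = (16 * X * A1) ^ 2 - (16 * X * A2) * (16 * X * A0) := by ring
  have hS : (8 * X ^ 2 : ℝ[X]) * (S - (1 - X ^ 2) ^ (2 * p) *
        (1 + (8 * ((p : ℝ[X]) + 1) ^ 2 - 2) * X ^ 2 + (X ^ 2) ^ 2))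
      = 4 * X ^ 2 * (2 * S) - 8 * X ^ 2 * ((1 - X ^ 2) ^ (2 * p) *
        (1 + (8 * ((p : ℝ[X]) + 1) ^ 2 - 2) * X ^ 2 + (X ^ 2) ^ 2)) := by ring
  rw [hq, hS, h0, h1, h2, h3]
  have hab : (1 - X ^ 2 : ℝ[X]) ^ (2 * p) = ((1 + X) ^ 2) ^ p * ((1 - X) ^ 2) ^ p := by
    rw [← mul_pow, pow_mul]
    congr 1
    ring
  have ha : (1 + X : ℝ[X]) ^ (4 * (p + 1)) = (((1 + X) ^ 2) ^ p) ^ 2 * (1 + X) ^ 4 := by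
    rw [← pow_mul, ← pow_mul, ← pow_add]
    congr 1
    ring
  have hb : (1 - X : ℝ[X]) ^ (4 * (p + 1)) = (((1 - X) ^ 2) ^ p) ^ 2 * (1 - X) ^ 4 := by
    rw [← pow_mul, ← pow_mul, ← pow_add]
    congr 1
    ring
  rw [hab, ha, hb]
  simp only [pow_succ ((1 + X : ℝ[X]) ^ 2) (_ + _), pow_succ ((1 - X : ℝ[X]) ^ 2) (_ + _),
    pow_succ ((1 + X : ℝ[X]) ^ 2) p, pow_succ ((1 - X : ℝ[X]) ^ 2) p]
  generalize ((1 + X : ℝ[X]) ^ 2) ^ p = α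
  generalize ((1 - X : ℝ[X]) ^ 2) ^ p = β
  push_cast
  ring

/-- One term of Vandermonde's identity. -/
lemma choose_sq_le (M j : ℕ) : M.choose j ^ 2 ≤ (2 * M).choose (2 * j) := by
  rw [two_mul M, Nat.add_choose_eq]
  have : (j, j) ∈ Finset.HasAntidiagonal.antidiagonal (2 * j) := by simp [two_mul]
  have h := Finset.single_le_sum (f := fun ij : ℕ × ℕ => M.choose ij.1 * M.choose ij.2)
    (fun _ _ => Nat.zero_le _) this
  simpa [sq] using h

lemma even_bound (M j : ℕ) :
    M.choose (j + 2) + M.choose j ≤ (2 * (M + 2)).choose (2 * (j + 2)) := by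
  have h1 : M.choose (j + 2) + M.choose j ≤ (M + 2).choose (j + 2) := by
    have a1 := Nat.choose_succ_succ (M + 1) (j + 1)
    have a2 := Nat.choose_succ_succ M (j + 1)
    have a3 := Nat.choose_succ_succ M j
    simp only [Nat.succ_eq_add_one, add_assoc, one_add_one_eq_two] at *
    omega
  calc _ ≤ (M + 2).choose (j + 2) := h1
    _ ≤ (M + 2).choose (j + 2) ^ 2 := Nat.le_self_pow (by norm_num) _
    _ ≤ _ := choose_sq_le _ _

lemma choose_three (M : ℕ) : (M + 2).choose 3 * 6 = (M + 2) * (M + 1) * M := by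
  have h := Nat.descFactorial_eq_factorial_mul_choose (M + 2) 3
  simp [Nat.descFactorial, Nat.factorial] at h
  linarith

/-- `M (M + 1) ≤ 2 C(M, j)` for `3 ≤ j ≤ M - 3` and `M ≥ 7`, with `j = i + 3`, `M - j = l + 3`. -/
lemma choose_lower (i l : ℕ) (h : 1 ≤ i + l) :
    (i + l + 6) * (i + l + 7) ≤ 2 * (i + l + 6).choose (i + 3) := by
  have base : ∀ t : ℕ, 1 ≤ t → (t + 6) * (t + 7) ≤ 2 * (t + 6).choose 3 := by
    intro t ht
    have := choose_three (t + 4)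
    nlinarith [Nat.zero_le t]
  induction i generalizing l with
  | zero => simpa using base l (by omega)
  | succ i ih =>
    induction l with
    | zero =>
      have hs := Nat.choose_symm_add (a := i + 4) (b := 3)
      have hb := base (i + 1) (by omega)
      rw [show i + 4 + 3 = i + 1 + 6 by ring, show i + 4 = i + 1 + 3 by ring] at hs
      rw [Nat.add_zero, hs]
      exact hb
    | succ l ihl =>
      have a := ih (l + 1) (by omega)
      have b := ihl (by omega)
      have c := Nat.choose_succ_succ (i + l + 7) (i + 3)
      simp only [Nat.succ_eq_add_one] at c
      rw [show i + (l + 1) + 6 = i + l + 7 by ring, show i + (l + 1) + 7 = i + l + 8 by ring] at a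
      rw [show i + 1 + l + 6 = i + l + 7 by ring, show i + 1 + l + 7 = i + l + 8 by ring,
        show i + 1 + 3 = i + 3 + 1 by ring] at b
      rw [show i + 1 + (l + 1) + 6 = i + l + 7 + 1 by ring,
        show i + 1 + (l + 1) + 7 = i + l + 9 by ring, show i + 1 + 3 = i + 3 + 1 by ring, c]
      nlinarith

/-- The estimate away from the ends: `m = i + l + 4`, `M = m + 2`, `j = i + 3`. -/
lemma odd_bound_mid (i l : ℕ) (h : 1 ≤ i + l) :
    2 * (i + l + 5) * (i + l + 7) * (i + l + 4).choose (i + 2)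
      ≤ (2 * (i + l + 6)).choose (2 * (i + 3)) := by
  refine le_trans ?_ (choose_sq_le _ _)
  have h1 := choose_lower i l h
  have h2 := choose_two_step (i + l + 4) (i + 2) (by omega)
  rw [show i + l + 4 + 2 = i + l + 6 by ring, show i + 2 + 1 = i + 3 by ring] at h2
  have h1' : ((i : ℝ) + l + 6) * (i + l + 7) ≤ 2 * ((i + l + 6).choose (i + 3) : ℝ) := by
    exact_mod_cast h1
  push_cast at h2
  have key : (2 * ((i : ℝ) + l + 5) * (i + l + 7) * ((i + l + 4).choose (i + 2) : ℝ))
      ≤ ((i + l + 6).choose (i + 3) : ℝ) ^ 2 := by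
    have hP : (0 : ℝ) ≤ ((i + l + 6).choose (i + 3) : ℝ) := by positivity
    generalize ((i + l + 6).choose (i + 3) : ℝ) = P at *
    generalize ((i + l + 4).choose (i + 2) : ℝ) = q at *
    have hM : (0 : ℝ) < (i : ℝ) + l + 6 := by positivity
    have ham : 4 * (((i : ℝ) + 3) * (l + 3)) ≤ (i + l + 6) ^ 2 := by
      nlinarith [sq_nonneg ((i : ℝ) - l)]
    refine le_of_mul_le_mul_left ?_ hM
    calc ((i : ℝ) + l + 6) * (2 * (i + l + 5) * (i + l + 7) * q)
        = (i + l + 7) * P / 2 * (4 * ((i + 3) * (l + 3))) := by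
          linear_combination (-2 * ((i : ℝ) + l + 7)) * h2
      _ ≤ (i + l + 7) * P / 2 * (i + l + 6) ^ 2 :=
          mul_le_mul_of_nonneg_left ham (by positivity)
      _ = (i + l + 6) * P / 2 * ((i + l + 6) * (i + l + 7)) := by ring
      _ ≤ (i + l + 6) * P / 2 * (2 * P) :=
          mul_le_mul_of_nonneg_left h1' (by positivity)
      _ = _ := by ring
  exact_mod_cast key

lemma odd_bound (p k : ℕ) (hk : Odd k) :
    2 * (2 * p + 1) * (2 * p + 3) * (2 * p).choose (k + 1)
      ≤ (4 * (p + 1)).choose (2 * (k + 2)) + (2 * p).choose (k + 2) + (2 * p).choose k := by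
  obtain ⟨t, rfl⟩ := hk
  rcases lt_trichotomy p (t + 1) with h | h | h
  · rw [Nat.choose_eq_zero_of_lt (show 2 * p < 2 * t + 1 + 1 by omega)]
    simp
  · subst h
    -- the index `j = M - 1`, where equality holds
    have e1 : (2 * (t + 1)).choose (2 * t + 1 + 1) = 1 := Nat.choose_self _
    have e2 : (2 * (t + 1)).choose (2 * t + 1) = 2 * t + 2 := Nat.choose_succ_self_right _
    have e3 : (4 * (t + 1 + 1)).choose (2 * (2 * t + 1 + 2)) = (4 * t + 8).choose 2 := by
      apply Nat.choose_symm_of_eq_add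
      ring
    have e4 : (4 * t + 8).choose 2 = (2 * t + 4) * (4 * t + 7) := by
      rw [Nat.choose_two_right, show 4 * t + 8 - 1 = 4 * t + 7 by omega]
      apply Nat.div_eq_of_eq_mul_left (by norm_num)
      ring
    rw [e1, e2, e3, e4]
    nlinarith
  · obtain ⟨u, rfl⟩ := Nat.exists_eq_add_of_lt h
    -- now `3 ≤ j = 2t + 3 ≤ M - 3 = 2t + 2u + 3`; the case `t = u = 0` is `M = 6`
    rcases Nat.eq_zero_or_pos (t + u) with h0 | h0
    · obtain ⟨rfl, rfl⟩ : t = 0 ∧ u = 0 := by omega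
      decide
    · have hm := odd_bound_mid (2 * t) (2 * u) (by omega)
      have e : 2 * (t + 1 + u + 1) = 2 * t + 2 * u + 4 := by ring
      rw [e, show 4 * (t + 1 + u + 1 + 1) = 2 * (2 * t + 2 * u + 6) by ring]
      exact hm.trans ((Nat.le_add_right _ _).trans (Nat.le_add_right _ _))

/-- The sequence `(N_n)` is `x`-log-concave: for `n ≥ 2` every coefficient of
`N_n(x)² − N_{n+1}(x) N_{n-1}(x)` is nonnegative. -/
theorem minusculeN_x_log_concave (n : ℕ) (hn : 2 ≤ n) (k : ℕ) :
    0 ≤ ((minusculeN n) ^ 2 - minusculeN (n + 1) * minusculeN (n - 1)).coeff k := by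
  obtain ⟨p, rfl⟩ : ∃ p, n = p + 1 := ⟨n - 1, by omega⟩
  rw [Nat.add_sub_cancel]
  have h := congrArg (fun q => q.coeff k) (minuscule_diff p)
  have e1 : (32 : ℝ[X]) * ((minusculeN (p + 1)) ^ 2 - minusculeN (p + 2) * minusculeN p)
      = C 32 * ((minusculeN (p + 1)) ^ 2 - minusculeN (p + 2) * minusculeN p) := rfl
  have e2 : (1 - X : ℝ[X]) ^ (2 * p) * (1 + (8 * ((p : ℝ[X]) + 1) ^ 2 - 2) * X + X ^ 2)
      = (1 - X) ^ (2 * p) + C (8 * ((p : ℝ) + 1) ^ 2 - 2) * ((1 - X) ^ (2 * p) * X)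
        + (1 - X) ^ (2 * p) * X ^ 2 := by
    simp only [C_sub, C_mul, C_add, C_pow, C_1, map_natCast, map_ofNat]
    ring
  simp only [e1, e2, coeff_sub, coeff_add, coeff_C_mul, coeff_evenBinom,
    coeff_one_sub_X_pow'] at h
  rw [show p + 1 + 1 = p + 2 by ring, coeff_sub]
  refine nonneg_of_mul_nonneg_right (a := 32) ?_ (by norm_num)
  rw [h]
  rcases k with _ | _ | k
  · simp
  · have e4 : (4 * (p + 1)).choose 2 = (2 * p + 2) * (4 * p + 3) := by
      rw [Nat.choose_two_right, show 4 * (p + 1) - 1 = 4 * p + 3 by omega]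
      apply Nat.div_eq_of_eq_mul_left (by norm_num)
      ring
    simp only [zero_add, mul_one, e4, coeff_mul_X_pow', coeff_mul_X, coeff_one_sub_X_pow']
    norm_num
    nlinarith
  · simp only [coeff_mul_X_pow, coeff_mul_X, coeff_one_sub_X_pow']
    rcases Nat.even_or_odd k with hk | hk
    · have hb := even_bound (2 * p) k
      rw [show 2 * (2 * p + 2) = 4 * (p + 1) by ring] at hb
      have hb' : ((2 * p).choose (k + 2) : ℝ) + ((2 * p).choose k : ℝ)
        ≤ ((4 * (p + 1)).choose (2 * (k + 2)) : ℝ) := by exact_mod_cast hb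
      have hpos : 0 ≤ (8 * ((p : ℝ) + 1) ^ 2 - 2) * ((2 * p).choose (k + 1) : ℝ) :=
        mul_nonneg (by nlinarith [Nat.cast_nonneg (α := ℝ) p]) (by positivity)
      simp only [add_assoc, one_add_one_eq_two, pow_add, hk.neg_one_pow]
      linarith
    · have hb := odd_bound p k hk
      have hb' : 2 * (2 * (p : ℝ) + 1) * (2 * p + 3) * ((2 * p).choose (k + 1) : ℝ)
        ≤ ((4 * (p + 1)).choose (2 * (k + 2)) : ℝ) + ((2 * p).choose (k + 2) : ℝ)
          + ((2 * p).choose k : ℝ) := by exact_mod_cast hb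
      simp only [add_assoc, one_add_one_eq_two, pow_add, hk.neg_one_pow]
      linarith
end

section
/- The infinite lower-triangular coefficient matrix N = [N_{n,k}]_{n,k ≥ 0}, where N_{n,k} := k(n−k) C(2n+2, 2k+1)/(4n+2) for 0 ≤ k ≤ n and N_{n,k} := 0 for k > n, is totally positive: for every r ≥ 1 and all strictly increasing index sequences n_1 < n_2 < ⋯ < n_r and k_1 < k_2 < ⋯ < k_r of natural numbers, the determinant of the r×r matrix [N_{n_i, k_j}]_{1 ≤ i,j ≤ r} is nonnegative. -/
/-! Up to multiplying the rows by `(2n+2)!/(4n+2)` and the columns by `k/(2k+1)!`, all nonnegative,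
the matrix is the Toeplitz matrix of the sequence `m/(2m+1)!`, whose generating function is
`x f'(x)` with `f(x) = sinh √x / √x`.  The function `f` has only real nonpositive zeros, hence so
does `x f'(x)`, and such a sequence is totally positive (a Pólya frequency sequence).

Everything is done at the level of polynomials.  The odd part of `(1+z)^(2M+1)` is
`z ∑ C(2M+1, 2m+1) X^m` with `X = z²`; the polynomial `∑ C(2M+1, 2m+1) X^m` has the `M` distinct real zeros `-tan² (jπ/(2M+1))`, `1 ≤ j ≤ M`, so it splits over
`ℝ` (`oddPart_splits`), and by Rolle's theorem so does its derivative (`splits_derivative`).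
A polynomial with nonnegative coefficients which splits over `ℝ` is a positive constant times a
product of factors `X + α` with `0 ≤ α`, and multiplying by such a factor preserves the total
positivity of the Toeplitz matrix of the coefficients, by multilinearity of the determinant in the
columns (`isTP_X_add_C_mul`); so the Toeplitz matrix of `m C(2M+1, 2m+1)` is totally positive.
After rescaling, `m C(2M+1, 2m+1) / (2M+1)^(2m+1)` tends to `m/(2m+1)!`, and minors are continuous
in the entries. -/

/-- The entries of the infinite lower-triangular coefficient matrix of the type A
minuscule polynomials: `N_{n,k} = k(n−k) C(2n+2, 2k+1)/(4n+2)` for `k ≤ n`, and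
`0` for `k > n`. -/
noncomputable def minusculeMatrixEntry (n k : ℕ) : ℝ :=
  if k ≤ n then
    ((k * (n - k) * Nat.choose (2 * n + 2) (2 * k + 1) : ℕ) : ℝ) / (4 * (n : ℝ) + 2)
  else 0

open Polynomial Filter Topology

/-- Total positivity of an infinite matrix: all minors are nonnegative. -/
def IsTP (A : ℕ → ℕ → ℝ) : Prop :=
  ∀ (r : ℕ) (ns ks : Fin r → ℕ), StrictMono ns → StrictMono ks →
    0 ≤ (Matrix.of fun i j : Fin r => A (ns i) (ks j)).det

/-- The lower-triangular Toeplitz matrix `[a_{n-k}]` of a sequence, with `a_m = 0` for `m < 0`. -/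
def toeplitz (a : ℕ → ℝ) (n k : ℕ) : ℝ := if k ≤ n then a (n - k) else 0

lemma IsTP.scale {A : ℕ → ℕ → ℝ} (hA : IsTP A) {u v : ℕ → ℝ} (hu : ∀ n, 0 ≤ u n)
    (hv : ∀ n, 0 ≤ v n) : IsTP fun n k => u n * (v k * A n k) := by
  intro r ns ks hns hks
  have h1 := Matrix.det_mul_column (fun i => u (ns i))
    (Matrix.of fun i j => v (ks j) * A (ns i) (ks j))
  have h2 := Matrix.det_mul_row (fun j => v (ks j)) (Matrix.of fun i j => A (ns i) (ks j))
  simp only [Matrix.of_apply] at h1 h2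
  rw [h1, h2]
  exact mul_nonneg (Finset.prod_nonneg fun _ _ => hu _)
    (mul_nonneg (Finset.prod_nonneg fun _ _ => hv _) (hA r ns ks hns hks))

lemma IsTP.of_tendsto {A : ℕ → ℕ → ℕ → ℝ} {B : ℕ → ℕ → ℝ} (hA : ∀ M, IsTP (A M))
    (h : ∀ n k, Tendsto (fun M => A M n k) atTop (𝓝 (B n k))) : IsTP B := by
  intro r ns ks hns hks
  have hc : Continuous fun X : Matrix (Fin r) (Fin r) ℝ => X.det := continuous_id.matrix_det
  have ht : Tendsto (fun M => (Matrix.of fun i j : Fin r => A M (ns i) (ks j))) atTop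
      (𝓝 (Matrix.of fun i j : Fin r => B (ns i) (ks j))) :=
    tendsto_pi_nhds.2 fun i => tendsto_pi_nhds.2 fun j => h _ _
  exact ge_of_tendsto' ((hc.tendsto _).comp ht) fun M => hA M r ns ks hns hks

/-- The Toeplitz matrix of the constant polynomial `1` is the identity matrix: a minor is `1` if
the row and column indices agree, and has a zero row otherwise. -/
lemma isTP_one : IsTP (toeplitz (1 : ℝ[X]).coeff) := by
  intro r ns ks hns hks
  have he : ∀ n k, toeplitz (1 : ℝ[X]).coeff n k = if n = k then 1 else 0 := by
    intro n k
    unfold toeplitz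
    rw [coeff_one]
    split_ifs <;> first | rfl | omega
  simp only [he]
  by_cases h : ∀ i, ∃ j, ns i = ks j
  · have hr : Set.range ns = Set.range ks := by
      have hsub : Finset.univ.image ns ⊆ Finset.univ.image ks := by
        intro x hx
        simp only [Finset.mem_image, Finset.mem_univ, true_and] at hx ⊢
        obtain ⟨i, rfl⟩ := hx
        obtain ⟨j, hj⟩ := h i
        exact ⟨j, hj.symm⟩
      have := Finset.eq_of_subset_of_card_le hsub (by
        rw [Finset.card_image_of_injective _ hns.injective,
          Finset.card_image_of_injective _ hks.injective])
      simpa using congrArg (fun s : Finset ℕ => (s : Set ℕ)) this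
    rw [StrictMono.range_inj hns hks] at hr
    subst hr
    have : (Matrix.of fun i j : Fin r => if ns i = ns j then (1 : ℝ) else 0) = 1 := by
      ext i j
      simp [Matrix.one_apply, hns.injective.eq_iff]
    rw [this, Matrix.det_one]
    exact zero_le_one
  · push Not at h
    obtain ⟨i, hi⟩ := h
    rw [Matrix.det_eq_zero_of_row_eq_zero i]
    intro j
    simp [hi j]

/-- Each column of the new matrix is the sum of the next column of the old one and `α` times the
column itself.  Expanding the determinant, every term is a nonnegative multiple of a minor whose
column indices `k_j + ε_j`, `ε_j ∈ {0, 1}`, are weakly increasing, so it vanishes or is a minor of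
the old matrix. -/
lemma isTP_X_add_C_mul {p : ℝ[X]} (hp : IsTP (toeplitz p.coeff)) {α : ℝ} (hα : 0 ≤ α) :
    IsTP (toeplitz ((X + C α) * p).coeff) := by
  have he : ∀ n k, toeplitz ((X + C α) * p).coeff n k
      = toeplitz p.coeff n (k + 1) + α * toeplitz p.coeff n k := by
    intro n k
    unfold toeplitz
    rw [add_mul, coeff_add, coeff_C_mul]
    rcases lt_trichotomy k n with h | h | h
    · obtain ⟨d, rfl⟩ := Nat.exists_eq_add_of_lt h
      rw [if_pos (by omega), if_pos (by omega), if_pos (by omega),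
        show k + d + 1 - k = d + 1 by omega, show k + d + 1 - (k + 1) = d by omega, coeff_X_mul]
    · subst h
      simp
    · rw [if_neg (by omega), if_neg (by omega), if_neg (by omega)]
      simp
  intro r ns ks hns hks
  rw [← Matrix.det_transpose]
  have hsplit : (Matrix.of fun i j : Fin r => toeplitz ((X + C α) * p).coeff (ns i) (ks j)).transpose
      = (fun j i => toeplitz p.coeff (ns i) (ks j + 1))
        + (fun j i => α * toeplitz p.coeff (ns i) (ks j)) := by
    ext j i
    simp [he]
  have hexp := (Matrix.detRowAlternating (R := ℝ) (n := Fin r)).toMultilinearMap.map_add_univ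
    (fun j i => toeplitz p.coeff (ns i) (ks j + 1))
    (fun j i => α * toeplitz p.coeff (ns i) (ks j))
  rw [hsplit]
  refine le_of_le_of_eq ?_ hexp.symm
  refine Finset.sum_nonneg fun s _ => ?_
  have hterm : (s.piecewise (fun j i => toeplitz p.coeff (ns i) (ks j + 1))
      (fun j i => α * toeplitz p.coeff (ns i) (ks j)) : Fin r → Fin r → ℝ)
      = fun j i => (if j ∈ s then 1 else α) *
          (Matrix.of fun i j => toeplitz p.coeff (ns i)
            (ks j + if j ∈ s then 1 else 0)).transpose j i := by
    ext j i
    by_cases hj : j ∈ s <;> simp [hj]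
  have hcol := Matrix.det_mul_column (fun j => if j ∈ s then 1 else α)
    (Matrix.of fun i j => toeplitz p.coeff (ns i) (ks j + if j ∈ s then 1 else 0)).transpose
  rw [hterm]
  refine le_of_le_of_eq ?_ hcol.symm
  rw [Matrix.det_transpose]
  refine mul_nonneg (Finset.prod_nonneg fun j _ => by split_ifs <;> positivity) ?_
  have hmono : Monotone fun j => ks j + if j ∈ s then 1 else 0 := by
    intro a b hab
    rcases hab.eq_or_lt with rfl | hab
    · exact le_rfl
    · have := hks hab
      dsimp only
      split_ifs <;> omega
  by_cases hinj : Function.Injective fun j => ks j + if j ∈ s then 1 else 0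
  · exact hp r ns _ hns (hmono.strictMono_of_injective hinj)
  · rw [Function.not_injective_iff] at hinj
    obtain ⟨a, b, hab, hne⟩ := hinj
    rw [Matrix.det_zero_of_column_eq hne]
    intro i
    simp only [Matrix.of_apply]
    exact congrArg (toeplitz p.coeff (ns i)) hab

lemma isTP_of_splits {p : ℝ[X]} (hs : p.Splits) (h0 : ∀ m, 0 ≤ p.coeff m) :
    IsTP (toeplitz p.coeff) := by
  have hroots : ∀ x ∈ p.roots, x ≤ 0 := by
    intro x hx
    by_contra! hpos
    obtain ⟨hp, hx⟩ := mem_roots'.1 hx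
    have : 0 < p.eval x := by
      rw [eval_eq_sum_range]
      refine Finset.sum_pos' (fun i _ => mul_nonneg (h0 i) (by positivity))
        ⟨p.natDegree, by simp, ?_⟩
      have : 0 < p.coeff p.natDegree :=
        lt_of_le_of_ne (h0 _) (Ne.symm (leadingCoeff_ne_zero.2 hp))
      positivity
    exact this.ne' hx
  have key : ∀ s : Multiset ℝ, (∀ x ∈ s, x ≤ 0) →
      IsTP (toeplitz (s.map (X - C ·)).prod.coeff) := by
    intro s
    induction s using Multiset.induction with
    | empty => intro _; simpa using isTP_one
    | cons a s ih =>
      intro h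
      rw [Multiset.map_cons, Multiset.prod_cons, show X - C a = X + C (-a) by simp [sub_eq_add_neg]]
      exact isTP_X_add_C_mul (ih fun x hx => h x (Multiset.mem_cons_of_mem hx))
        (neg_nonneg.2 (h a (Multiset.mem_cons_self a s)))
  have := (key p.roots hroots).scale (u := fun _ => p.leadingCoeff) (v := fun _ => 1)
    (fun _ => h0 _) (fun _ => zero_le_one)
  convert this using 3 with n k
  conv_lhs => rw [hs.eq_prod_roots]
  unfold toeplitz
  split_ifs <;> simp

lemma splits_derivative {p : ℝ[X]} (hs : p.Splits) : (derivative p).Splits := by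
  rw [splits_iff_card_roots] at hs ⊢
  have h1 := card_roots_le_derivative p
  have h2 := natDegree_derivative_le p
  have h3 := card_roots' (derivative p)
  omega

/-- The odd part of `(1 + z) ^ (2M+1)`, divided by `z`, as a polynomial in `X = z ^ 2`. -/
noncomputable def oddPart (M : ℕ) : ℝ[X] :=
  ∑ m ∈ Finset.range (M + 1), C ((Nat.choose (2 * M + 1) (2 * m + 1) : ℕ) : ℝ) * X ^ m

lemma oddPart_coeff (M m : ℕ) : (oddPart M).coeff m = (Nat.choose (2 * M + 1) (2 * m + 1) : ℕ) := by
  unfold oddPart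
  simp only [finsetSum_coeff, coeff_C_mul_X_pow, Finset.sum_ite_eq, Finset.mem_range]
  split_ifs with h
  · rfl
  · rw [Nat.choose_eq_zero_of_lt (by omega), Nat.cast_zero]

lemma one_add_pow_sub_one_sub_pow (M : ℕ) (z : ℂ) :
    (1 + z) ^ (2 * M + 1) - (1 - z) ^ (2 * M + 1) = 2 * z *
      ∑ m ∈ Finset.range (M + 1), (Nat.choose (2 * M + 1) (2 * m + 1) : ℂ) * (z ^ 2) ^ m := by
  have hpair : ∀ (f : ℕ → ℂ) (n : ℕ), ∑ i ∈ Finset.range (2 * n), f i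
      = ∑ m ∈ Finset.range n, (f (2 * m) + f (2 * m + 1)) := by
    intro f n
    induction n with
    | zero => simp
    | succ n ih =>
      rw [show 2 * (n + 1) = 2 * n + 1 + 1 by ring, Finset.sum_range_succ, Finset.sum_range_succ,
        ih, Finset.sum_range_succ]
      ring
  rw [show 1 + z = z + 1 by ring, show 1 - z = -z + 1 by ring, add_pow, add_pow,
    ← Finset.sum_sub_distrib, show 2 * M + 1 + 1 = 2 * (M + 1) by ring, hpair, Finset.mul_sum]
  refine Finset.sum_congr rfl fun m _ => ?_
  have e1 : (-z) ^ (2 * m) = z ^ (2 * m) := by rw [pow_mul, pow_mul, neg_sq]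
  rw [pow_succ (-z), e1]
  simp only [one_pow]
  ring

/-- With `z = i tan θ`, one has `(1 ± z) cos θ = exp (± i θ)`; for `θ = jπ/(2M+1)` the powers
`(1 ± z) ^ (2M+1)` agree because `sin (jπ) = 0`. -/
lemma oddPart_eval (M j : ℕ) (hj : 1 ≤ j) (hjM : j ≤ M) :
    (oddPart M).eval (-(Real.tan (j * Real.pi / (2 * M + 1))) ^ 2) = 0 := by
  set θ : ℝ := j * Real.pi / (2 * M + 1) with hθ
  have hj' : (1 : ℝ) ≤ j := by exact_mod_cast hj
  have hM' : (j : ℝ) ≤ M := by exact_mod_cast hjM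
  have hpi := Real.pi_pos
  have h0 : 0 < θ := by positivity
  have h1 : θ < Real.pi / 2 := by
    rw [hθ, div_lt_div_iff₀ (by positivity) (by norm_num)]
    nlinarith
  have hcos : Real.cos θ ≠ 0 := (Real.cos_pos_of_mem_Ioo ⟨by linarith, h1⟩).ne'
  have htan : Real.tan θ ≠ 0 := (Real.tan_pos_of_pos_of_lt_pi_div_two h0 h1).ne'
  have hN : ((2 * M + 1 : ℕ) : ℂ) * (θ : ℂ) = (j : ℂ) * Real.pi := by
    rw [hθ]
    push_cast
    have : (2 * (M : ℂ) + 1) ≠ 0 := by exact_mod_cast (Nat.succ_ne_zero (2 * M))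
    field_simp
  have hc : Complex.cos θ ≠ 0 := by exact_mod_cast hcos
  have e1 : 1 + (Real.tan θ : ℂ) * Complex.I
      = (Complex.cos θ + Complex.sin θ * Complex.I) / Complex.cos θ := by
    rw [Complex.ofReal_tan, Complex.tan_eq_sin_div_cos]
    field_simp
  have e2 : 1 - (Real.tan θ : ℂ) * Complex.I
      = (Complex.cos (-θ) + Complex.sin (-θ) * Complex.I) / Complex.cos θ := by
    rw [Complex.ofReal_tan, Complex.tan_eq_sin_div_cos, Complex.cos_neg, Complex.sin_neg]
    field_simp
    ring
  have hsin : Complex.sin ((j : ℂ) * Real.pi) = 0 := Complex.sin_nat_mul_pi j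
  have hz := one_add_pow_sub_one_sub_pow M ((Real.tan θ : ℂ) * Complex.I)
  rw [e1, e2, div_pow, div_pow, Complex.cos_add_sin_mul_I_pow, Complex.cos_add_sin_mul_I_pow,
    mul_neg, Complex.cos_neg, Complex.sin_neg, hN, hsin, neg_zero, sub_self] at hz
  have hz' := (mul_eq_zero.1 hz.symm).resolve_left (by
    refine mul_ne_zero two_ne_zero (mul_ne_zero ?_ Complex.I_ne_zero)
    exact_mod_cast htan)
  rw [mul_pow, Complex.I_sq, mul_neg_one] at hz'
  unfold oddPart
  rw [eval_finsetSum]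
  simp only [eval_mul, eval_C, eval_pow, eval_X]
  exact_mod_cast hz'

lemma oddPart_splits (M : ℕ) : (oddPart M).Splits := by
  rw [splits_iff_card_roots]
  refine le_antisymm (card_roots' _) ?_
  have hdeg : (oddPart M).natDegree ≤ M := by
    rw [natDegree_le_iff_coeff_eq_zero]
    intro m hm
    rw [oddPart_coeff, Nat.choose_eq_zero_of_lt (by omega), Nat.cast_zero]
  have hne : oddPart M ≠ 0 := by
    intro h
    have := oddPart_coeff M M
    simp [h] at this
  refine hdeg.trans ?_
  let g : ℕ → ℝ := fun j => -(Real.tan (j * Real.pi / (2 * M + 1))) ^ 2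
  have hpi := Real.pi_pos
  have hlt : ∀ j ∈ Finset.Icc 1 M, 0 < j * Real.pi / (2 * M + 1) ∧
      j * Real.pi / (2 * M + 1) < Real.pi / 2 := by
    intro j hj
    rw [Finset.mem_Icc] at hj
    have hj' : (1 : ℝ) ≤ j := by exact_mod_cast hj.1
    have hM' : (j : ℝ) ≤ M := by exact_mod_cast hj.2
    refine ⟨by positivity, ?_⟩
    rw [div_lt_div_iff₀ (by positivity) (by norm_num)]
    nlinarith
  have hinj : Set.InjOn g (Finset.Icc 1 M : Finset ℕ) := by
    intro a ha b hb hab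
    obtain ⟨a0, a1⟩ := hlt a ha
    obtain ⟨b0, b1⟩ := hlt b hb
    have h2 := (pow_left_inj₀ (Real.tan_pos_of_pos_of_lt_pi_div_two a0 a1).le
      (Real.tan_pos_of_pos_of_lt_pi_div_two b0 b1).le two_ne_zero).1 (neg_injective hab)
    have h3 := Real.tan_inj_of_lt_of_lt_pi_div_two (by linarith) a1 (by linarith) b1 h2
    have h4 : (a : ℝ) = b := by
      have : (2 * (M : ℝ) + 1) ≠ 0 := by positivity
      field_simp at h3
      exact h3
    exact_mod_cast h4
  have hsub : (Finset.Icc 1 M).image g ⊆ (oddPart M).roots.toFinset := by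
    intro x hx
    obtain ⟨j, hj, rfl⟩ := Finset.mem_image.1 hx
    rw [Finset.mem_Icc] at hj
    rw [Multiset.mem_toFinset, mem_roots hne]
    exact oddPart_eval M j hj.1 hj.2
  calc M = ((Finset.Icc 1 M).image g).card := by
        rw [Finset.card_image_of_injOn hinj, Nat.card_Icc, Nat.add_sub_cancel]
    _ ≤ _ := Finset.card_le_card hsub
    _ ≤ _ := Multiset.toFinset_card_le _

lemma isTP_oddPart (M : ℕ) :
    IsTP (toeplitz fun m => (m : ℝ) * (Nat.choose (2 * M + 1) (2 * m + 1) : ℕ)) := by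
  have hc : (X * derivative (oddPart M)).coeff
      = fun m : ℕ => (m : ℝ) * (Nat.choose (2 * M + 1) (2 * m + 1) : ℕ) := by
    funext m
    cases m with
    | zero => simp
    | succ m =>
      rw [coeff_X_mul, coeff_derivative, oddPart_coeff]
      push_cast
      ring
  rw [← hc]
  refine isTP_of_splits (splits_X_mul.2 (splits_derivative (oddPart_splits M))) fun m => ?_
  rw [hc]
  positivity

lemma isTP_limit : IsTP (toeplitz fun m => (m : ℝ) / (2 * m + 1).factorial) := by
  refine IsTP.of_tendsto
    (A := fun M => toeplitz fun m => (m : ℝ) * ((Nat.choose (2 * M + 1) (2 * m + 1) : ℕ) *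
      (1 / ((2 * M + 1 : ℕ) : ℝ)) ^ (2 * m + 1))) ?_ ?_
  · intro M
    -- Dividing the `m`-th coefficient by `(2M+1) ^ (2m+1)` is a diagonal rescaling of the matrix.
    have h := (isTP_oddPart M).scale
      (u := fun n => (1 / ((2 * M + 1 : ℕ) : ℝ)) ^ (2 * n + 1))
      (v := fun k => ((2 * M + 1 : ℕ) : ℝ) ^ (2 * k)) (fun _ => by positivity)
      (fun _ => by positivity)
    convert h using 3 with n k
    unfold toeplitz
    split_ifs with hk
    · obtain ⟨d, rfl⟩ := Nat.exists_eq_add_of_le hk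
      rw [Nat.add_sub_cancel_left]
      have : ((2 * M + 1 : ℕ) : ℝ) ≠ 0 := by positivity
      generalize ((2 * M + 1 : ℕ) : ℝ) = c at *
      rw [show 2 * (k + d) + 1 = 2 * d + 1 + 2 * k by ring, pow_add (1 / c), one_div,
        inv_pow c (2 * k)]
      field_simp
    · simp
  · intro n k
    unfold toeplitz
    split_ifs
    · have h1 : Tendsto (fun N : ℕ => (N : ℝ) * (1 / (N : ℝ))) atTop (𝓝 1) := by
        refine tendsto_const_nhds.congr' ?_
        filter_upwards [eventually_ne_atTop 0] with N hN
        have : (N : ℝ) ≠ 0 := by exact_mod_cast hN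
        field_simp
      have h2 := ProbabilityTheory.tendsto_choose_mul_pow_atTop (2 * (n - k) + 1) h1
      have h3 : Tendsto (fun M : ℕ => 2 * M + 1) atTop atTop :=
        tendsto_atTop_mono (fun M => by simp only [id]; omega) tendsto_id
      have h4 := (h2.comp h3).const_mul ((n - k : ℕ) : ℝ)
      simpa [div_eq_mul_inv] using h4
    · exact tendsto_const_nhds

/-- The coefficient matrix `[N_{n,k}]_{n,k ≥ 0}` is totally positive: every minor
taken from strictly increasing rows `n₁ < ⋯ < n_r` and columns `k₁ < ⋯ < k_r`
has nonnegative determinant. -/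
theorem minusculeMatrix_totally_positive (r : ℕ) (hr : 1 ≤ r)
    (ns ks : Fin r → ℕ) (hns : StrictMono ns) (hks : StrictMono ks) :
    0 ≤ (Matrix.of fun i j : Fin r => minusculeMatrixEntry (ns i) (ks j)).det := by
  have h := isTP_limit.scale (u := fun n => ((2 * n + 2).factorial : ℝ) / (4 * n + 2))
    (v := fun k => (k : ℝ) / (2 * k + 1).factorial) (fun _ => by positivity)
    (fun _ => by positivity)
  convert h r ns ks hns hks using 5 with i j
  unfold minusculeMatrixEntry toeplitz
  beta_reduce
  by_cases hk : ks j ≤ ns i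
  · rw [if_pos hk, if_pos hk]
    generalize ns i = n at *
    generalize ks j = k at *
    obtain ⟨d, rfl⟩ := Nat.exists_eq_add_of_le hk
    rw [Nat.add_sub_cancel_left]
    push_cast
    rw [Nat.cast_choose ℝ (show 2 * k + 1 ≤ 2 * (k + d) + 2 by omega),
      show 2 * (k + d) + 2 - (2 * k + 1) = 2 * d + 1 by omega]
    ring
  · simp [hk]
end
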